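/- For every planar simple graph G₁ on n vertices and every planar simple graph G₂ with 4·|V(G₂)| ≤ n, there exists an injective map f from the vertex set of G₂ to the vertex set of G₁ that generates no shared edge, i.e., for every edge {a,b} of G₂, the pair {f(a), f(b)} is not an edge of G₁. -/

import Mathlib

open Set Bornology

/-- Points of the Euclidean plane. -/
abbrev Pt : Type := ℝ × ℝ

/-- `A` is an arc connecting `p` and `q`: the image of a continuous injective map
from `[0,1]` to the plane sending `0` to `p` and `1` to `q`. -/
def IsArcBetween (A : Set Pt) (p q : Pt) : Prop :=
  ∃ f : ℝ → Pt, ContinuousOn f (Set.Icc 0 1) ∧ Set.InjOn f (Set.Icc 0 1) ∧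
    f 0 = p ∧ f 1 = q ∧ A = f '' Set.Icc 0 1

/-- A planar drawing of a finite simple graph `G`: an injective placement of the
vertices in the plane, together with an arc for each edge joining the images of its
endpoints, such that no arc passes through the image of a vertex other than its two
endpoints, and two distinct arcs intersect only at images of shared endpoints. -/
structure PlanarDrawing {V : Type} [Fintype V] (G : SimpleGraph V) where
  ρ : V → Pt
  inj : Function.Injective ρ
  arc : Sym2 V → Set Pt
  arc_isArc : ∀ u v : V, G.Adj u v → IsArcBetween (arc s(u, v)) (ρ u) (ρ v)
  vertex_mem : ∀ e ∈ G.edgeSet, ∀ w : V, ρ w ∈ arc e → w ∈ e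
  arcs_cross : ∀ e ∈ G.edgeSet, ∀ e' ∈ G.edgeSet, e ≠ e' →
    ∀ x ∈ arc e ∩ arc e', ∃ w : V, w ∈ e ∧ w ∈ e' ∧ x = ρ w

/-!
A compact plane set `K` fails to separate `p` from `q` exactly when `(z - q) / (z - p)` has a
continuous logarithm on `K` (Eilenberg's criterion). Gluing logarithms along arcs shows that an arc
closing up a connected part of a drawing creates a new face, that an edge borders at most two faces,
and that two arcs separate nothing, so that every face is bordered by at least three edges. Hence a
planar graph satisfies `|E| ≤ 3 |V| - 6` on every set of at least three vertices.

Only this edge bound is needed for packing. Let `m = |V(G₂)|`. As `G₂` is `5`-degenerate, and even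
`4`-degenerate when `m ≤ 11`, its vertices can be placed greedily on any set of vertices of small
degree in `G₁`; if this fails then `G₁` has too many vertices of large degree, which contradicts the
edge bound as soon as `m ≥ 8`. For `m ≤ 7`, the graph `G₁` contains an independent set of size
`m - 1` together with one more vertex having few neighbours in it, and a vertex of least degree of
`G₂` is placed on that extra vertex.
-/

/-! ### Continuous logarithms -/

lemma exists_eqOn_of_eqOn_inter {X Y : Type*} {S T : Set X} {l l' : X → Y}
    (h : EqOn l l' (S ∩ T)) : ∃ L : X → Y, EqOn L l S ∧ EqOn L l' T := by
  classical
  refine ⟨S.piecewise l l', piecewise_eqOn S l l', fun z hz => ?_⟩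
  by_cases hzS : z ∈ S
  · rw [piecewise_eq_of_mem _ _ _ hzS, h ⟨hzS, hz⟩]
  · exact piecewise_eq_of_notMem _ _ _ hzS

section Logarithm

variable {X : Type*} [TopologicalSpace X] {S T : Set X} {f g : X → ℂ}

/-- `g` has a continuous logarithm on `S`. -/
def HasLog (S : Set X) (g : X → ℂ) : Prop :=
  ∃ l : X → ℂ, ContinuousOn l S ∧ ∀ z ∈ S, Complex.exp (l z) = g z

namespace HasLog

lemma mono (h : HasLog T g) (hST : S ⊆ T) : HasLog S g :=
  let ⟨l, hl, he⟩ := h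
  ⟨l, hl.mono hST, fun z hz => he z (hST hz)⟩

lemma congr (h : HasLog S f) (hfg : EqOn f g S) : HasLog S g :=
  let ⟨l, hl, he⟩ := h
  ⟨l, hl, fun z hz => (he z hz).trans (hfg hz)⟩

lemma const (S : Set X) {c : ℂ} (hc : c ≠ 0) : HasLog S fun _ => c :=
  ⟨fun _ => Complex.log c, continuousOn_const, fun _ _ => Complex.exp_log hc⟩

lemma div (hf : HasLog S f) (hg : HasLog S g) : HasLog S fun z => f z / g z :=
  let ⟨l, hl, he⟩ := hf
  let ⟨l', hl', he'⟩ := hg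
  ⟨fun z => l z - l' z, hl.sub hl', fun z hz => by rw [Complex.exp_sub, he z hz, he' z hz]⟩

lemma of_homotopy {H : ℝ → X → ℂ}
    (hc : ContinuousOn (fun x : ℝ × X => H x.1 x.2) (Icc 0 1 ×ˢ S))
    (hne : ∀ t ∈ Icc (0 : ℝ) 1, ∀ z ∈ S, H t z ≠ 0) (h0 : HasLog S (H 0)) :
    HasLog S (H 1) := by
  classical
  obtain ⟨l, hl, he⟩ := h0
  let H' : C(unitInterval × S, {z : ℂ // z ≠ 0}) :=
    { toFun x := ⟨H x.1 x.2, hne _ x.1.2 _ x.2.2⟩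
      continuous_toFun := (hc.comp_continuous
        (f := fun x : unitInterval × S => ((x.1 : ℝ), (x.2 : X)))
        (by fun_prop) fun x => ⟨x.1.2, x.2.2⟩).subtype_mk _ }
  let l₀ : C(S, ℂ) := ⟨S.domRestrict l, continuousOn_iff_continuous_domRestrict.mp hl⟩
  have hstart : ∀ z, H' (0, z) = ⟨Complex.exp (l₀ z), Complex.exp_ne_zero _⟩ :=
    fun z => Subtype.ext (he z z.2).symm
  let L := Complex.isCoveringMap_exp.liftHomotopy H' l₀ hstart
  have hL := Complex.isCoveringMap_exp.liftHomotopy_lifts H' l₀ hstart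
  refine ⟨fun z => if hz : z ∈ S then L (1, ⟨z, hz⟩) else 0, ?_, fun z hz => ?_⟩
  · rw [continuousOn_iff_continuous_domRestrict]
    exact (show Continuous fun z : S => L (1, z) by fun_prop).congr fun z => by simp
  · simpa only [hz, dif_pos] using! congrArg Subtype.val (congrFun hL (1, ⟨z, hz⟩))

lemma of_starConvex {E : Type*} [AddCommGroup E] [Module ℝ E] [TopologicalSpace E]
    [IsTopologicalAddGroup E] [ContinuousSMul ℝ E] {S : Set E} {c : E} {g : E → ℂ}
    (hS : StarConvex ℝ c S) (hc : c ∈ S) (hg : ContinuousOn g S) (hg0 : ∀ z ∈ S, g z ≠ 0) :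
    HasLog S g := by
  have hmem : ∀ t ∈ Icc (0 : ℝ) 1, ∀ z ∈ S, c + t • (z - c) ∈ S :=
    fun t ht z hz => hS.add_smul_sub_mem hz ht.1 ht.2
  have h := of_homotopy (S := S) (H := fun t z => g (c + t • (z - c)))
    (hg.comp (by fun_prop) fun x hx => hmem x.1 hx.1 x.2 hx.2)
    (fun t ht z hz => hg0 _ (hmem t ht z hz)) ((const S (hg0 c hc)).congr fun z _ => by simp)
  simpa using h

end HasLog

lemma eqOn_of_exp_eqOn {l l' : X → ℂ} (hS : IsPreconnected S) (hl : ContinuousOn l S)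
    (hl' : ContinuousOn l' S) (he : ∀ z ∈ S, Complex.exp (l z) = Complex.exp (l' z)) {a : X}
    (ha : a ∈ S) (haa : l a = l' a) : EqOn l l' S :=
  (T2Space.isSeparatedMap _).eqOn_of_comp_eqOn
    Complex.isCoveringMap_exp.isLocalHomeomorph.isLocallyInjective hS hl hl'
    (fun z hz => Subtype.ext (he z hz)) ha haa

namespace HasLog

lemma exists_continuousOn_inter (hS : HasLog S g) (hT : HasLog T g)
    (hST : IsPreconnected (S ∩ T)) :
    ∃ l : X → ℂ, ContinuousOn l S ∧ ContinuousOn l T ∧ ∀ z ∈ S ∪ T, Complex.exp (l z) = g z := by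
  obtain ⟨l, hl, he⟩ := hS
  obtain ⟨l', hl', he'⟩ := hT
  obtain ⟨c, hc, hagree⟩ : ∃ c, Complex.exp c = 1 ∧ EqOn l (fun z => l' z + c) (S ∩ T) := by
    rcases (S ∩ T).eq_empty_or_nonempty with hempty | ⟨a, ha⟩
    · exact ⟨0, Complex.exp_zero, by simp [hempty]⟩
    · have hc : Complex.exp (l a - l' a) = 1 := by
        rw [Complex.exp_sub, he a ha.1, ← he' a ha.2, div_self (Complex.exp_ne_zero _)]
      refine ⟨l a - l' a, hc, eqOn_of_exp_eqOn hST (hl.mono inter_subset_left)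
        ((hl'.mono inter_subset_right).add continuousOn_const) (fun z hz => ?_) ha (by ring)⟩
      rw [Complex.exp_add, hc, mul_one, he z hz.1, he' z hz.2]
  obtain ⟨L, hLl, hLl'⟩ := exists_eqOn_of_eqOn_inter hagree
  refine ⟨L, hl.congr hLl, (hl'.add continuousOn_const).congr hLl', fun z hz => ?_⟩
  rcases hz with hz | hz
  · rw [hLl hz, he z hz]
  · rw [hLl' hz, Complex.exp_add, hc, mul_one, he' z hz]

lemma union_of_isClosed (hS : HasLog S g) (hT : HasLog T g) (hSc : IsClosed S) (hTc : IsClosed T)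
    (hST : IsPreconnected (S ∩ T)) : HasLog (S ∪ T) g :=
  let ⟨l, hlS, hlT, he⟩ := hS.exists_continuousOn_inter hT hST
  ⟨l, hlS.union_of_isClosed hlT hSc hTc, he⟩

lemma union_of_isOpen (hS : HasLog S g) (hT : HasLog T g) (hSo : IsOpen S) (hTo : IsOpen T)
    (hST : IsPreconnected (S ∩ T)) : HasLog (S ∪ T) g :=
  let ⟨l, hlS, hlT, he⟩ := hS.exists_continuousOn_inter hT hST
  ⟨l, hlS.union_of_isOpen hlT hSo hTo, he⟩

lemma exists_log_eq_at (hS : HasLog S g) (hT : HasLog T g) {a b : X} (ha : a ∈ S ∩ T)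
    (hb : b ∈ S ∩ T) :
    ∃ (l l' : X → ℂ) (d : ℤ), ContinuousOn l S ∧ ContinuousOn l' T ∧
      (∀ z ∈ S, Complex.exp (l z) = g z) ∧ (∀ z ∈ T, Complex.exp (l' z) = g z) ∧
      l a = l' a ∧ l b = l' b + d * (2 * Real.pi * Complex.I) := by
  obtain ⟨l, hl, he⟩ := hS
  obtain ⟨l', hl', he'⟩ := hT
  have hc : Complex.exp (l a - l' a) = 1 := by
    rw [Complex.exp_sub, he a ha.1, ← he' a ha.2, div_self (Complex.exp_ne_zero _)]
  have he'' : ∀ z ∈ T, Complex.exp (l' z + (l a - l' a)) = g z := fun z hz => by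
    rw [Complex.exp_add, hc, mul_one, he' z hz]
  obtain ⟨d, hd⟩ := Complex.exp_eq_exp_iff_exists_int.mp ((he b hb.1).trans (he'' b hb.2).symm)
  exact ⟨l, fun z => l' z + (l a - l' a), d, hl, hl'.add continuousOn_const, he, he'', by ring, hd⟩

lemma exists_zpow_mul_zpow_union (hSc : IsClosed S) (hTc : IsClosed T) {a b : X}
    (hST : S ∩ T = {a, b}) (hfS : HasLog S f) (hfT : HasLog T f) (hgS : HasLog S g)
    (hgT : HasLog T g) :
    ∃ x y : ℤ, (x ≠ 0 ∨ y ≠ 0) ∧ HasLog (S ∪ T) fun z => f z ^ x * g z ^ y := by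
  have ha : a ∈ S ∩ T := hST ▸ mem_insert a {b}
  have hb : b ∈ S ∩ T := hST ▸ mem_insert_of_mem a rfl
  obtain ⟨l, l', d, hl, hl', he, he', hla, hlb⟩ := hfS.exists_log_eq_at hfT ha hb
  obtain ⟨m, m', e, hm, hm', hn, hn', hma, hmb⟩ := hgS.exists_log_eq_at hgT ha hb
  obtain ⟨x, y, hxy, hsum⟩ : ∃ x y : ℤ, (x ≠ 0 ∨ y ≠ 0) ∧ x * d + y * e = 0 := by
    by_cases hd : d = 0
    · exact ⟨1, 0, by simp, by simp [hd]⟩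
    · exact ⟨e, -d, Or.inr (neg_ne_zero.mpr hd), by ring⟩
  have hagree : EqOn (fun z => x * l z + y * m z) (fun z => x * l' z + y * m' z) (S ∩ T) := by
    rw [hST]
    rintro z (rfl | rfl)
    · simp only [hla, hma]
    · have hsum' : (x : ℂ) * d + y * e = 0 := by exact_mod_cast hsum
      simp only [hlb, hmb]
      linear_combination (2 * Real.pi * Complex.I) * hsum'
  obtain ⟨L, hL, hL'⟩ := exists_eqOn_of_eqOn_inter hagree
  have hLS : ContinuousOn L S :=
    ((continuousOn_const.mul hl).add (continuousOn_const.mul hm)).congr hL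
  have hLT : ContinuousOn L T :=
    ((continuousOn_const.mul hl').add (continuousOn_const.mul hm')).congr hL'
  refine ⟨x, y, hxy, L, hLS.union_of_isClosed hLT hSc hTc, fun z hz => ?_⟩
  rcases hz with hz | hz
  · rw [hL hz, Complex.exp_add, Complex.exp_int_mul, Complex.exp_int_mul, he z hz, hn z hz]
  · rw [hL' hz, Complex.exp_add, Complex.exp_int_mul, Complex.exp_int_mul, he' z hz, hn' z hz]

lemma exists_continuousMap_exp_eq [NormalSpace X] (hS : IsClosed S) (h : HasLog S g) :
    ∃ Λ : C(X, ℂ), ∀ z ∈ S, Complex.exp (Λ z) = g z := by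
  obtain ⟨l, hl, he⟩ := h
  let l₀ : C(S, ℂ) := ⟨S.domRestrict l, continuousOn_iff_continuous_domRestrict.mp hl⟩
  obtain ⟨Λ, hΛ⟩ := ContinuousMap.exists_restrict_eq hS l₀
  refine ⟨Λ, fun z hz => ?_⟩
  rw [show Λ z = l z from DFunLike.congr_fun hΛ ⟨z, hz⟩, he z hz]

end HasLog

end Logarithm

/-! ### Arcs and components -/

lemma HasLog.image_of_isCompact {X Y : Type*} [TopologicalSpace X] [TopologicalSpace Y]
    [T4Space Y] {S : Set X} {φ : X → Y} {g : Y → ℂ} (hS : IsCompact S)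
    (hφ : ContinuousOn φ S) (hinj : InjOn φ S) (h : HasLog S (g ∘ φ)) : HasLog (φ '' S) g := by
  obtain ⟨l, hl, he⟩ := h
  have : CompactSpace S := isCompact_iff_compactSpace.mp hS
  have hemb : Topology.IsClosedEmbedding (S.domRestrict φ) :=
    (continuousOn_iff_continuous_domRestrict.mp hφ).isClosedEmbedding hinj.injective
  obtain ⟨Λ, hΛ⟩ := ContinuousMap.exists_extension hemb
    ⟨S.domRestrict l, continuousOn_iff_continuous_domRestrict.mp hl⟩
  refine ⟨Λ, Λ.continuous.continuousOn, ?_⟩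
  rintro _ ⟨t, ht, rfl⟩
  rw [show Λ (φ t) = l t from DFunLike.congr_fun hΛ ⟨t, ht⟩, he t ht, Function.comp_apply]

section Arc

variable {X Y : Type*} [TopologicalSpace X] [TopologicalSpace Y] {A : Set X} {a b : X}

/-- `A` is an arc from `a` to `b`: the image of `[0, 1]` under an injective path. On the plane this
is `IsArcBetween`, freed from the choice of coordinates so that arcs can be moved to `ℂ`. -/
def IsArc (A : Set X) (a b : X) : Prop :=
  ∃ f : ℝ → X, ContinuousOn f (Icc 0 1) ∧ InjOn f (Icc 0 1) ∧ f 0 = a ∧ f 1 = b ∧ A = f '' Icc 0 1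

namespace IsArc

lemma isCompact (hA : IsArc A a b) : IsCompact A := by
  obtain ⟨f, hf, -, -, -, rfl⟩ := hA
  exact isCompact_Icc.image_of_continuousOn hf

lemma left_mem (hA : IsArc A a b) : a ∈ A := by
  obtain ⟨f, -, -, rfl, -, rfl⟩ := hA
  exact mem_image_of_mem f (left_mem_Icc.mpr zero_le_one)

lemma right_mem (hA : IsArc A a b) : b ∈ A := by
  obtain ⟨f, -, -, -, rfl, rfl⟩ := hA
  exact mem_image_of_mem f (right_mem_Icc.mpr zero_le_one)

lemma ne (hA : IsArc A a b) : a ≠ b := by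
  obtain ⟨f, -, hinj, rfl, rfl, -⟩ := hA
  exact hinj.ne (left_mem_Icc.mpr zero_le_one) (right_mem_Icc.mpr zero_le_one) zero_ne_one

lemma joinedIn (hA : IsArc A a b) : JoinedIn A a b := by
  obtain ⟨f, hf, -, rfl, rfl, rfl⟩ := hA
  exact ((convex_Icc (0 : ℝ) 1).isPathConnected ⟨0, left_mem_Icc.mpr zero_le_one⟩).image' hf
    |>.joinedIn _ (mem_image_of_mem f (left_mem_Icc.mpr zero_le_one))
    _ (mem_image_of_mem f (right_mem_Icc.mpr zero_le_one))

lemma isPathConnected_diff_endpoints (hA : IsArc A a b) : IsPathConnected (A \ {a, b}) := by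
  obtain ⟨f, hf, hinj, rfl, rfl, rfl⟩ := hA
  rw [← image_pair, ← hinj.image_sdiff_subset (pair_subset (by simp) (by simp)), Icc_sdiff_both]
  exact ((convex_Ioo (0 : ℝ) 1).isPathConnected ⟨1 / 2, by norm_num⟩).image'
    (hf.mono Ioo_subset_Icc_self)

lemma image {φ : X → Y} (hA : IsArc A a b) (hφ : Continuous φ) (hinj : Function.Injective φ) :
    IsArc (φ '' A) (φ a) (φ b) := by
  obtain ⟨f, hf, hfi, rfl, rfl, rfl⟩ := hA
  exact ⟨φ ∘ f, hφ.comp_continuousOn hf, hinj.comp_injOn hfi, rfl, rfl, (image_comp φ f _).symm⟩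

lemma hasLog [T4Space X] (hA : IsArc A a b) {g : X → ℂ} (hg : ContinuousOn g A)
    (hg0 : ∀ z ∈ A, g z ≠ 0) : HasLog A g := by
  obtain ⟨f, hf, hinj, -, -, rfl⟩ := hA
  refine HasLog.image_of_isCompact isCompact_Icc hf hinj ?_
  exact HasLog.of_starConvex ((convex_Icc (0 : ℝ) 1).starConvex (left_mem_Icc.mpr zero_le_one))
    (left_mem_Icc.mpr zero_le_one) (hg.comp hf (mapsTo_image f _))
    fun t ht => hg0 _ (mem_image_of_mem f ht)

end IsArc

end Arc

section Components

variable {K : Set ℂ} {p q : ℂ}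

lemma sub_ne_zero_of_notMem {S : Set ℂ} {p z : ℂ} (hp : p ∉ S) (hz : z ∈ S) : z - p ≠ 0 :=
  sub_ne_zero.mpr (ne_of_mem_of_not_mem hz hp)

lemma hasLog_div_of_joinedIn {S : Set ℂ} (h : JoinedIn Sᶜ p q) :
    HasLog S fun z => (z - q) / (z - p) := by
  have hp : p ∉ S := h.source_mem
  obtain ⟨γ, hγ⟩ := h
  have hγS : ∀ t ∈ Icc (0 : ℝ) 1, γ.extend t ∉ S := fun t ht => by
    rw [γ.extend_apply ht]
    exact hγ ⟨t, ht⟩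
  have hden : ∀ z ∈ S, z - p ≠ 0 := fun z => sub_ne_zero_of_notMem hp
  have h := HasLog.of_homotopy (S := S) (H := fun t z => (z - γ.extend t) / (z - p))
    (ContinuousOn.div (by fun_prop) (by fun_prop) fun x hx => hden x.2 hx.2)
    (fun t ht z hz => div_ne_zero (sub_ne_zero_of_notMem (hγS t ht) hz) (hden z hz))
    ((HasLog.const S one_ne_zero).congr fun z hz => by simp [hden z hz])
  simpa using h

lemma joinedIn_of_mem_closure {U : Set ℂ} (hU : IsOpen U) {z : ℂ}
    (hz : z ∈ closure (pathComponentIn U p)) (hzU : z ∈ U) : JoinedIn U p z := by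
  obtain ⟨w, hzw, hpw⟩ :=
    mem_closure_iff.mp hz _ (hU.pathComponentIn z) (mem_pathComponentIn_self hzU)
  exact JoinedIn.trans hpw hzw.symm

lemma frontier_pathComponentIn_compl_subset (hK : IsClosed K) :
    frontier (pathComponentIn Kᶜ p) ⊆ K := by
  intro z hz
  by_contra hzK
  rw [(hK.isOpen_compl.pathComponentIn p).frontier_eq] at hz
  exact hz.2 (joinedIn_of_mem_closure hK.isOpen_compl hz.1 hzK)

lemma isPathConnected_setOf_lt_norm {R : ℝ} (hR : 0 ≤ R) : IsPathConnected {z : ℂ | R < ‖z‖} := by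
  have hpolar : IsPathConnected (Ioi R ×ˢ Metric.sphere (0 : ℂ) 1) :=
    ((convex_Ioi R).isPathConnected nonempty_Ioi).prod
      (isPathConnected_sphere (by simp [Complex.rank_real_complex]) 0 zero_le_one)
  convert! hpolar.image (f := fun x : ℝ × ℂ => (x.1 : ℂ) * x.2) (by fun_prop) using 1
  ext z
  constructor
  · intro hz
    have hz0 : ‖z‖ ≠ 0 := (hR.trans_lt hz).ne'
    exact ⟨(‖z‖, z / ‖z‖), ⟨hz, by simp [hz0]⟩, mul_div_cancel₀ z (by exact_mod_cast hz0)⟩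
  · rintro ⟨⟨r, u⟩, ⟨hr, hu⟩, rfl⟩
    have hu' : ‖u‖ = 1 := by simpa using hu
    simpa [hu', abs_of_nonneg (hR.trans (le_of_lt hr))] using! hr

lemma exists_joinedIn_lt_norm (hp : ¬IsBounded (pathComponentIn Kᶜ p)) (R : ℝ) :
    ∃ z, JoinedIn Kᶜ p z ∧ R < ‖z‖ := by
  by_contra! hsmall
  exact hp (isBounded_iff_forall_norm_le.mpr ⟨R, hsmall⟩)

lemma joinedIn_compl_of_not_isBounded (hK : IsBounded K) (hp : ¬IsBounded (pathComponentIn Kᶜ p))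
    (hq : ¬IsBounded (pathComponentIn Kᶜ q)) : JoinedIn Kᶜ p q := by
  obtain ⟨R, hR, hKR⟩ := hK.exists_pos_norm_le
  obtain ⟨z, hpz, hz⟩ := exists_joinedIn_lt_norm hp R
  obtain ⟨w, hqw, hw⟩ := exists_joinedIn_lt_norm hq R
  have hzw : JoinedIn {z : ℂ | R < ‖z‖} z w :=
    (isPathConnected_setOf_lt_norm hR.le).joinedIn z hz w hw
  exact (hpz.trans (hzw.mono fun v hv hvK => (hKR v hvK).not_gt hv)).trans hqw.symm

lemma not_hasLog_sphere {R : ℝ} (hR : 0 < R) {n : ℤ} (hn : n ≠ 0) :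
    ¬HasLog (Metric.sphere p R) fun z => (z - p) ^ n := by
  rintro ⟨l, hl, he⟩
  have hmem : ∀ θ, circleMap p R θ ∈ Metric.sphere p R := circleMap_mem_sphere p hR.le
  let m : ℝ → ℂ := fun θ => l (circleMap p R 0) + n * (θ * Complex.I)
  have hexp : ∀ θ ∈ univ, Complex.exp (l (circleMap p R θ)) = Complex.exp (m θ) := fun θ _ => by
    simp only [m, Complex.exp_add, Complex.exp_int_mul, he _ (hmem _)]
    simp [circleMap, mul_zpow]
  have hperiod : l (circleMap p R (2 * Real.pi)) = m (2 * Real.pi) :=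
    eqOn_of_exp_eqOn isPreconnected_univ
      (hl.comp (continuous_circleMap p R).continuousOn fun θ _ => hmem θ) (by fun_prop) hexp
      (mem_univ 0) (by simp [m]) (mem_univ _)
  have hzero : (n : ℂ) * (2 * Real.pi * Complex.I) = 0 := by
    simpa [m, (periodic_circleMap p R).eq] using hperiod
  simp [hn, Real.pi_ne_zero] at hzero

end Components

/-! ### Eilenberg's criterion -/

section Eilenberg

variable {K A : Set ℂ} {a b p q : ℂ}

lemma not_hasLog_frontier {U : Set ℂ} (hU : IsOpen U) (hUb : IsBounded U) (hp : p ∈ U) {h : ℂ → ℂ}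
    (hh : ContinuousOn h (closure U)) (hh0 : ∀ z ∈ closure U, h z ≠ 0) {n : ℤ} (hn : n ≠ 0) :
    ¬HasLog (frontier U) fun z => (z - p) ^ n * h z := by
  classical
  intro hlog
  obtain ⟨Λ, hΛ⟩ := hlog.exists_continuousMap_exp_eq isClosed_frontier
  have hpU : ∀ z ∈ Uᶜ, z - p ≠ 0 := fun z => sub_ne_zero_of_notMem (not_not.mpr hp)
  -- The log of `(z - p) ^ n * h z` makes `(z - p) ^ n` extend over `U` without zeros.
  let H : ℂ → ℂ := U.piecewise (fun z => Complex.exp (Λ z) / h z) fun z => (z - p) ^ n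
  have hH : Continuous H := by
    refine continuous_piecewise (fun z hz => ?_) (ContinuousOn.div (by fun_prop) hh hh0) ?_
    · rw [hΛ z hz, mul_div_cancel_right₀ _ (hh0 z (frontier_subset_closure hz))]
    · rw [hU.isClosed_compl.closure_eq]
      exact ContinuousOn.zpow₀ (by fun_prop) n fun z hz => Or.inl (hpU z hz)
  have hH0 : ∀ z, H z ≠ 0 := fun z => by
    by_cases hz : z ∈ U
    · rw [show H z = _ from piecewise_eq_of_mem _ _ _ hz]
      exact div_ne_zero (Complex.exp_ne_zero _) (hh0 z (subset_closure hz))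
    · rw [show H z = _ from piecewise_eq_of_notMem _ _ _ hz]
      exact zpow_ne_zero n (hpU z hz)
  have hHlog : HasLog univ H := HasLog.of_starConvex (starConvex_univ 0) (mem_univ 0)
    hH.continuousOn fun z _ => hH0 z
  obtain ⟨R, hR, hUR⟩ := hUb.subset_ball_lt 0 p
  refine not_hasLog_sphere hR hn
    ((hHlog.mono (subset_univ (Metric.sphere p R))).congr fun z hz => ?_)
  exact piecewise_eq_of_notMem _ _ _ fun hzU => (Metric.mem_ball.mp (hUR hzU)).ne hz

theorem eq_zero_of_hasLog_prod_zpow {ι : Type*} [Fintype ι] (hK : IsCompact K) {p : ι → ℂ}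
    (hp : ∀ i, p i ∉ K) (hsep : Pairwise fun i j => ¬JoinedIn Kᶜ (p i) (p j)) {n : ι → ℤ}
    (hn : ∑ i, n i = 0) (hlog : HasLog K fun z => ∏ i, (z - p i) ^ n i) : n = 0 := by
  classical
  have hbounded : ∀ i, IsBounded (pathComponentIn Kᶜ (p i)) → n i = 0 := by
    intro i hi
    by_contra hni
    have hne : ∀ z ∈ closure (pathComponentIn Kᶜ (p i)), ∀ j ∈ Finset.univ.erase i,
        z - p j ≠ 0 := by
      intro z hz j hj hzj
      rw [sub_eq_zero.mp hzj] at hz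
      exact hsep (Finset.ne_of_mem_erase hj).symm
        (joinedIn_of_mem_closure hK.isClosed.isOpen_compl hz (hp j))
    refine not_hasLog_frontier (hK.isClosed.isOpen_compl.pathComponentIn (p i)) hi
      (mem_pathComponentIn_self (hp i)) (h := fun z => ∏ j ∈ Finset.univ.erase i, (z - p j) ^ n j)
      (continuousOn_finsetProd _ fun j hj => ContinuousOn.zpow₀ (by fun_prop) _
        fun z hz => Or.inl (hne z hz j hj))
      (fun z hz => Finset.prod_ne_zero_iff.mpr fun j hj => zpow_ne_zero _ (hne z hz j hj)) hni
      ((hlog.mono (frontier_pathComponentIn_compl_subset hK.isClosed)).congr fun z _ => ?_)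
    exact (Finset.mul_prod_erase _ _ (Finset.mem_univ i)).symm
  by_contra hn0
  obtain ⟨i, hi⟩ := Function.ne_iff.mp hn0
  have hothers : ∀ j, j ≠ i → n j = 0 := fun j hj => hbounded j <| by
    by_contra hj'
    exact hsep hj (joinedIn_compl_of_not_isBounded hK.isBounded hj' (mt (hbounded i) hi))
  exact hi ((Fintype.sum_eq_single i hothers).symm.trans hn)

theorem hasLog_div_iff_joinedIn (hK : IsCompact K) (hp : p ∉ K) (hq : q ∉ K) :
    (HasLog K fun z => (z - q) / (z - p)) ↔ JoinedIn Kᶜ p q := by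
  refine ⟨fun hlog => ?_, hasLog_div_of_joinedIn⟩
  by_contra hpq
  have hzero := eq_zero_of_hasLog_prod_zpow hK (p := ![p, q]) (n := ![-1, 1])
    (by simp [Fin.forall_fin_two, hp, hq])
    (by simp [Pairwise, Fin.forall_fin_two, hpq, mt JoinedIn.symm hpq]) (by simp)
    (hlog.congr fun z _ => by simp [Fin.prod_univ_two, div_eq_inv_mul])
  simpa using congrFun hzero 1

/-- The points of `Q` lie in pairwise distinct components of the complement of `K`. The number of
faces of a drawing is measured by the size of such sets. -/
def PairwiseSeparated (K Q : Set ℂ) : Prop :=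
  Q ⊆ Kᶜ ∧ Q.Pairwise fun p q => ¬JoinedIn Kᶜ p q

-- Two quotients `(z - q) / (z - p)` and `(z - r) / (z - q)` have logs on `K` and on `A`; the
-- mismatches at the endpoints of `A` are integers, so some nontrivial combination has a log on
-- `K ∪ A`.
theorem PairwiseSeparated.card_le_two {Q : Finset ℂ} (hQ : PairwiseSeparated (K ∪ A) Q)
    (hK : IsCompact K) (hA : IsArc A a b) (hKA : K ∩ A = {a, b})
    (hjoin : ∀ p ∈ Q, ∀ q ∈ Q, JoinedIn Kᶜ p q) : Q.card ≤ 2 := by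
  by_contra! hcard
  obtain ⟨φ⟩ : Nonempty (Fin 3 ↪ Q) :=
    Function.Embedding.nonempty_of_card_le (by simpa using! hcard)
  let p : Fin 3 → ℂ := fun i => φ i
  have hp : ∀ i, p i ∉ K ∪ A := fun i => hQ.1 (φ i).2
  have hne : ∀ i, ∀ z ∈ K ∪ A, z - p i ≠ 0 := fun i z => sub_ne_zero_of_notMem (hp i)
  have hlogK : ∀ i j, HasLog K fun z => (z - p j) / (z - p i) :=
    fun i j => hasLog_div_of_joinedIn (hjoin _ (φ i).2 _ (φ j).2)
  have hlogA : ∀ i j, HasLog A fun z => (z - p j) / (z - p i) := fun i j =>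
    hA.hasLog (ContinuousOn.div (by fun_prop) (by fun_prop) fun z hz => hne i z (Or.inr hz))
      fun z hz => div_ne_zero (hne j z (Or.inr hz)) (hne i z (Or.inr hz))
  obtain ⟨x, y, hxy, hlog⟩ := HasLog.exists_zpow_mul_zpow_union hK.isClosed
    hA.isCompact.isClosed hKA (hlogK 0 1) (hlogA 0 1) (hlogK 1 2) (hlogA 1 2)
  have hexp : (![-x, x - y, y] : Fin 3 → ℤ) = 0 := by
    refine eq_zero_of_hasLog_prod_zpow (hK.union hA.isCompact) hp
      (fun i j hij => hQ.2 (φ i).2 (φ j).2 (Subtype.coe_injective.ne (φ.injective.ne hij)))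
      (by simp only [Fin.sum_univ_three, Matrix.cons_val]; ring) (hlog.congr fun z hz => ?_)
    have := hne 0 z hz
    have := hne 1 z hz
    simp only [Fin.prod_univ_three, Matrix.cons_val, div_zpow, zpow_neg, zpow_sub₀ this]
    field_simp
  rcases hxy with hx | hy
  · exact hx (by simpa using congrFun hexp 0)
  · exact hy (by simpa using congrFun hexp 2)

lemma not_hasLog_div_compl_pair (hab : a ≠ b) :
    ¬HasLog ({a, b}ᶜ) fun z : ℂ => (z - b) / (z - a) := by
  intro hlog
  have hR : 0 < dist a b / 2 := half_pos (dist_pos.mpr hab)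
  have hb : b ∉ Metric.closedBall a (dist a b / 2) := by
    rw [Metric.mem_closedBall, dist_comm b]
    linarith
  have hne : ∀ z ∈ Metric.sphere a (dist a b / 2), z - b ≠ 0 := fun z hz =>
    sub_ne_zero_of_notMem hb (Metric.sphere_subset_closedBall hz)
  have hlogb : HasLog (Metric.closedBall a (dist a b / 2)) fun z => z - b :=
    HasLog.of_starConvex ((convex_closedBall a _).starConvex (Metric.mem_closedBall_self hR.le))
      (Metric.mem_closedBall_self hR.le) (by fun_prop) fun z => sub_ne_zero_of_notMem hb
  have hsub : Metric.sphere a (dist a b / 2) ⊆ {a, b}ᶜ := by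
    rintro z hz (rfl | rfl)
    · exact Metric.ne_of_mem_sphere hz hR.ne' rfl
    · exact hne z hz (sub_self z)
  refine not_hasLog_sphere hR one_ne_zero
    (((hlogb.mono Metric.sphere_subset_closedBall).div (hlog.mono hsub)).congr fun z hz => ?_)
  have := hne z hz
  field_simp

theorem not_isPreconnected_pathComponentIn_diff (hK : IsClosed K) (hA : IsArc A a b)
    (hKA : K ∩ A = {a, b}) (hab : JoinedIn K a b) {c : ℂ} (hc : c ∈ A \ {a, b}) :
    ¬IsPreconnected (pathComponentIn Kᶜ c \ A) := by
  intro hpre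
  have hAK : A \ {a, b} ⊆ Kᶜ := fun z hz hzK => hz.2 (hKA ▸ ⟨hzK, hz.1⟩)
  have hlogF : HasLog (pathComponentIn Kᶜ c) fun z => (z - b) / (z - a) :=
    (hasLog_div_of_joinedIn (S := Kᶜ) (by rwa [compl_compl])).mono pathComponentIn_subset
  have hlogA : HasLog Aᶜ fun z => (z - b) / (z - a) :=
    hasLog_div_of_joinedIn (by rw [compl_compl]; exact hA.joinedIn)
  refine not_hasLog_div_compl_pair hA.ne <|
    (hlogF.union_of_isOpen hlogA (hK.isOpen_compl.pathComponentIn c)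
      hA.isCompact.isClosed.isOpen_compl hpre).mono fun z hz => ?_
  by_cases hzA : z ∈ A
  · exact Or.inl (hA.isPathConnected_diff_endpoints.subset_pathComponentIn hc hAK ⟨hzA, hz⟩)
  · exact Or.inr hzA

theorem exists_not_joinedIn_union_arc (hK : IsClosed K) (hA : IsArc A a b)
    (hKA : K ∩ A = {a, b}) (hab : JoinedIn K a b) {c : ℂ} (hc : c ∈ A \ {a, b}) :
    ∃ p q, JoinedIn Kᶜ c p ∧ JoinedIn Kᶜ c q ∧ p ∉ A ∧ q ∉ A ∧ ¬JoinedIn (K ∪ A)ᶜ p q := by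
  by_contra! hcon
  refine not_isPreconnected_pathComponentIn_diff hK hA hKA hab hc ?_
  rcases (pathComponentIn Kᶜ c \ A).eq_empty_or_nonempty with hempty | ⟨p, hp⟩
  · exact hempty ▸ isPreconnected_empty
  · have hface : pathComponentIn Kᶜ c \ A = pathComponentIn (K ∪ A)ᶜ p := by
      refine Subset.antisymm (fun q hq => hcon p q hp.1 hq.1 hp.2 hq.2) fun q hq => ?_
      exact ⟨hp.1.trans (hq.mono (compl_subset_compl.mpr subset_union_left)),
        fun hqA => hq.target_mem (Or.inr hqA)⟩
    rw [hface]
    exact (isPathConnected_pathComponentIn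
      (hcon p p hp.1 hp.1 hp.2 hp.2).source_mem).isConnected.isPreconnected

namespace PairwiseSeparated

lemma mono {L Q R : Set ℂ} (hQ : PairwiseSeparated K Q) (hKL : K ⊆ L) (hRQ : R ⊆ Q)
    (hR : R ⊆ Lᶜ) : PairwiseSeparated L R :=
  ⟨hR, fun _ hp _ hq hpq hL => hQ.2 (hRQ hp) (hRQ hq) hpq (hL.mono (compl_subset_compl.mpr hKL))⟩

protected lemma insert {Q : Set ℂ} (hQ : PairwiseSeparated K Q) (hp : p ∉ K)
    (hpQ : ∀ q ∈ Q, ¬JoinedIn Kᶜ p q) : PairwiseSeparated K (insert p Q) :=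
  ⟨insert_subset hp hQ.1, hQ.2.insert fun q hq _ => ⟨hpQ q hq, fun h => hpQ q hq h.symm⟩⟩

open scoped Classical in
lemma card_le_card_filter_not_joinedIn_succ {Q : Finset ℂ} (hQ : PairwiseSeparated K Q) (c : ℂ) :
    Q.card ≤ (Q.filter fun s => ¬JoinedIn Kᶜ c s).card + 1 := by
  have hone : (Q.filter fun s => JoinedIn Kᶜ c s).card ≤ 1 := by
    refine Finset.card_le_one.mpr fun s hs t ht => by_contra fun hst => ?_
    rw [Finset.mem_filter] at hs ht
    exact hQ.2 hs.1 ht.1 hst (hs.2.symm.trans ht.2)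
  have hsplit := Finset.card_filter_add_card_filter_not (s := Q) fun s => JoinedIn Kᶜ c s
  lia

theorem exists_card_succ_le {Q : Finset ℂ} (hQ : PairwiseSeparated K Q) (hK : IsClosed K)
    (hA : IsArc A a b) (hKA : K ∩ A = {a, b}) (hab : JoinedIn K a b) :
    ∃ Q' : Finset ℂ, PairwiseSeparated (K ∪ A) Q' ∧ Q.card + 1 ≤ Q'.card := by
  classical
  obtain ⟨c, hc⟩ := hA.isPathConnected_diff_endpoints.nonempty
  obtain ⟨p, q, hcp, hcq, hpA, hqA, hpq⟩ := exists_not_joinedIn_union_arc hK hA hKA hab hc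
  have hmono : ∀ {s t}, JoinedIn (K ∪ A)ᶜ s t → JoinedIn Kᶜ s t :=
    fun h => h.mono (compl_subset_compl.mpr subset_union_left)
  have hAK : A \ {a, b} ⊆ Kᶜ := fun z hz hzK => hz.2 (hKA ▸ ⟨hzK, hz.1⟩)
  let R := Q.filter fun s => ¬JoinedIn Kᶜ c s
  have hR : ∀ s ∈ R, s ∈ Q ∧ ¬JoinedIn Kᶜ c s := fun s => Finset.mem_filter.mp
  have hRcompl : ∀ s ∈ R, s ∉ K ∪ A := by
    rintro s hs (hsK | hsA)
    · exact hQ.1 (hR s hs).1 hsK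
    · refine (hR s hs).2 (hA.isPathConnected_diff_endpoints.subset_pathComponentIn hc hAK
        ⟨hsA, fun hsab => hQ.1 (hR s hs).1 ?_⟩)
      exact inter_subset_left (hKA ▸ hsab)
  have hpqR : PairwiseSeparated (K ∪ A) ↑(insert p (insert q R)) := by
    rw [Finset.coe_insert, Finset.coe_insert]
    refine ((hQ.mono subset_union_left (Finset.filter_subset _ Q) hRcompl).insert
      (not_or.mpr ⟨hcq.target_mem, hqA⟩) fun s hs hqs => (hR s hs).2 (hcq.trans (hmono hqs))).insert
      (not_or.mpr ⟨hcp.target_mem, hpA⟩) ?_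
    rintro s (rfl | hs) hps
    · exact hpq hps
    · exact (hR s hs).2 (hcp.trans (hmono hps))
  refine ⟨_, hpqR, ?_⟩
  have hqR : q ∉ R := fun hq => (hR q hq).2 hcq
  have hpR : p ∉ insert q R := by
    rw [Finset.mem_insert]
    rintro (rfl | hp)
    · exact hpq (JoinedIn.refl (not_or.mpr ⟨hcp.target_mem, hpA⟩))
    · exact (hR p hp).2 hcp
  rw [Finset.card_insert_of_notMem hpR, Finset.card_insert_of_notMem hqR]
  exact Nat.add_le_add_right (hQ.card_le_card_filter_not_joinedIn_succ c) 1

end PairwiseSeparated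

end Eilenberg

/-! ### Euler's edge bound -/

lemma HasLog.union_of_finite {X : Type*} [TopologicalSpace X] [T1Space X] {S T : Set X}
    {g : X → ℂ} (hS : HasLog S g) (hSc : IsClosed S) (hT : T.Finite) (hg0 : ∀ x ∈ T, g x ≠ 0) :
    HasLog (S ∪ T) g := by
  induction T, hT using Set.Finite.induction_on with
  | empty => rwa [union_empty]
  | @insert x T _ hT ih =>
    rw [union_insert, insert_eq, union_comm]
    exact (ih fun y hy => hg0 y (Or.inr hy)).union_of_isClosed
      ((HasLog.const {x} (hg0 x (mem_insert x T))).congr fun y hy => by rw [hy])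
      (hSc.union hT.isClosed) isClosed_singleton
      (subsingleton_singleton.anti inter_subset_right).isPreconnected

section Drawing

variable {V : Type} [Fintype V] {G : SimpleGraph V}

lemma exists_spanning_forest [Nonempty V] (G : SimpleGraph V) : ∃ F : Finset (Sym2 V),
    (F : Set (Sym2 V)) ⊆ G.edgeSet ∧ F.card + 1 ≤ Fintype.card V ∧
      ∀ u v, G.Adj u v → (SimpleGraph.fromEdgeSet (F : Set (Sym2 V))).Reachable u v := by
  classical
  obtain ⟨F, hFG, hF, hreach⟩ := G.exists_isAcyclic_reachable_eq_le
  obtain ⟨T, hFT, -, hT⟩ :=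
    SimpleGraph.connected_top.exists_isTree_le_of_le_of_isAcyclic le_top hF
  refine ⟨F.edgeFinset, by simpa using hFG, ?_, fun u v huv => ?_⟩
  · rw [← hT.card_edgeFinset]
    gcongr
  · rw [SimpleGraph.coe_edgeFinset, SimpleGraph.fromEdgeSet_edgeSet, hreach]
    exact huv.reachable

namespace PlanarDrawing

variable (D : PlanarDrawing G) {E : Finset (Sym2 V)} {e e' : Sym2 V} {u v w : V}

/-- The position of the vertex `v`, as a complex number. -/
noncomputable def point (v : V) : ℂ := Complex.equivRealProdCLM.symm (D.ρ v)

/-- The arc representing the edge `e`, as a subset of the complex plane. -/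
def edgeArc (e : Sym2 V) : Set ℂ := Complex.equivRealProdCLM.symm '' D.arc e

/-- The arc representing the edge `e` without its endpoints. -/
def openArc (e : Sym2 V) : Set ℂ := D.edgeArc e \ D.point '' e

/-- The part of the plane covered by all vertices and by the arcs of the edges in `E`. -/
def skeleton (E : Finset (Sym2 V)) : Set ℂ := range D.point ∪ ⋃ e ∈ E, D.edgeArc e

lemma isArc_edgeArc (h : G.Adj u v) : IsArc (D.edgeArc s(u, v)) (D.point u) (D.point v) :=
  IsArc.image (D.arc_isArc u v h) Complex.equivRealProdCLM.symm.continuous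
    Complex.equivRealProdCLM.symm.injective

lemma isCompact_edgeArc (he : e ∈ G.edgeSet) : IsCompact (D.edgeArc e) := by
  induction e with
  | h u v => exact (D.isArc_edgeArc he).isCompact

lemma isPathConnected_openArc (he : e ∈ G.edgeSet) : IsPathConnected (D.openArc e) := by
  induction e with
  | h u v =>
    rw [openArc, Sym2.coe_mk, image_pair]
    exact (D.isArc_edgeArc he).isPathConnected_diff_endpoints

lemma mem_of_point_mem_edgeArc (he : e ∈ G.edgeSet) (hw : D.point w ∈ D.edgeArc e) : w ∈ e :=
  D.vertex_mem e he w ((Complex.equivRealProdCLM.symm.injective.mem_set_image).mp hw)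

lemma edgeArc_inter_edgeArc_subset (he : e ∈ G.edgeSet) (he' : e' ∈ G.edgeSet) (hne : e ≠ e') :
    D.edgeArc e ∩ D.edgeArc e' ⊆ D.point '' (e ∩ e') := by
  rintro _ ⟨⟨x, hx, rfl⟩, hx'⟩
  obtain ⟨w, hw, hw', rfl⟩ := D.arcs_cross e he e' he' hne x
    ⟨hx, (Complex.equivRealProdCLM.symm.injective.mem_set_image).mp hx'⟩
  exact mem_image_of_mem D.point ⟨hw, hw'⟩

lemma subsingleton_edgeArc_inter_edgeArc (he : e ∈ G.edgeSet) (he' : e' ∈ G.edgeSet)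
    (hne : e ≠ e') : (D.edgeArc e ∩ D.edgeArc e').Subsingleton := by
  refine (Subsingleton.image (fun u hu v hv => ?_) D.point).anti
    (D.edgeArc_inter_edgeArc_subset he he' hne)
  by_contra huv
  exact hne (Sym2.eq_of_ne_mem huv hu.1 hv.1 hu.2 hv.2)

lemma isCompact_skeleton (hE : (E : Set (Sym2 V)) ⊆ G.edgeSet) : IsCompact (D.skeleton E) :=
  (finite_range D.point).isCompact.union
    (E.isCompact_biUnion fun _ he => D.isCompact_edgeArc (hE he))

lemma skeleton_mono {B : Finset (Sym2 V)} (h : B ⊆ E) : D.skeleton B ⊆ D.skeleton E :=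
  union_subset_union_right _ (biUnion_subset_biUnion_left h)

lemma skeleton_insert [DecidableEq V] :
    D.skeleton (insert e E) = D.skeleton E ∪ D.edgeArc e := by
  rw [skeleton, Finset.set_biUnion_insert, union_comm (D.edgeArc e), ← union_assoc, skeleton]

lemma mem_openArc_of_mem_edgeArc {z : ℂ} (hz : z ∈ D.edgeArc e)
    (hzE : z ∉ D.skeleton E) : z ∈ D.openArc e :=
  ⟨hz, fun h => hzE (Or.inl (image_subset_range _ _ h))⟩

lemma disjoint_openArc_skeleton (hE : (E : Set (Sym2 V)) ⊆ G.edgeSet) (he : e ∈ G.edgeSet)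
    (heE : e ∉ E) : Disjoint (D.openArc e) (D.skeleton E) := by
  rw [disjoint_left]
  rintro z ⟨hz, hzp⟩ (⟨w, rfl⟩ | hzE)
  · exact hzp (mem_image_of_mem _ (D.mem_of_point_mem_edgeArc he hz))
  · obtain ⟨e', he', hz'⟩ := mem_iUnion₂.mp hzE
    exact hzp (image_mono inter_subset_left <| D.edgeArc_inter_edgeArc_subset he (hE he')
      (ne_of_mem_of_not_mem he' heE).symm ⟨hz, hz'⟩)

lemma skeleton_inter_edgeArc (hE : (E : Set (Sym2 V)) ⊆ G.edgeSet) (h : G.Adj u v)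
    (heE : s(u, v) ∉ E) : D.skeleton E ∩ D.edgeArc s(u, v) = {D.point u, D.point v} := by
  refine Subset.antisymm (fun z hz => ?_) (pair_subset ?_ ?_)
  · by_contra hzp
    refine disjoint_left.mp (D.disjoint_openArc_skeleton hE h heE) ⟨hz.2, ?_⟩ hz.1
    rwa [Sym2.coe_mk, image_pair]
  · exact ⟨Or.inl (mem_range_self u), (D.isArc_edgeArc h).left_mem⟩
  · exact ⟨Or.inl (mem_range_self v), (D.isArc_edgeArc h).right_mem⟩

lemma joinedIn_skeleton (hE : (E : Set (Sym2 V)) ⊆ G.edgeSet)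
    (h : (SimpleGraph.fromEdgeSet (E : Set (Sym2 V))).Reachable u v) :
    JoinedIn (D.skeleton E) (D.point u) (D.point v) := by
  obtain ⟨p⟩ := h
  induction p with
  | nil => exact JoinedIn.refl (Or.inl (mem_range_self _))
  | cons huv _ ih =>
    have he := ((SimpleGraph.fromEdgeSet_adj _).mp huv).1
    exact ((D.isArc_edgeArc (hE he)).joinedIn.mono fun z hz =>
      Or.inr (mem_biUnion he hz)).trans ih

-- The arcs of a spanning forest leave at least one face, and every further arc creates one more.
theorem exists_pairwiseSeparated_skeleton [Nonempty V] (hE : (E : Set (Sym2 V)) = G.edgeSet) :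
    ∃ Q : Finset ℂ, PairwiseSeparated (D.skeleton E) Q ∧
      E.card + 2 ≤ Q.card + Fintype.card V := by
  classical
  obtain ⟨F, hF, hFcard, hFG⟩ := exists_spanning_forest G
  have hFE : F ⊆ E := Finset.coe_subset.mp (hE ▸ hF)
  suffices h : ∀ T ⊆ E \ F, ∃ Q : Finset ℂ,
      PairwiseSeparated (D.skeleton (T ∪ F)) Q ∧ T.card + 1 ≤ Q.card by
    obtain ⟨Q, hQ, hcard⟩ := h _ Subset.rfl
    rw [Finset.sdiff_union_of_subset hFE] at hQ
    have := Finset.card_sdiff_add_card_eq_card hFE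
    exact ⟨Q, hQ, by lia⟩
  intro T hT
  induction T using Finset.induction_on with
  | empty =>
    obtain ⟨p, hp⟩ := (ne_univ_iff_exists_notMem _).mp (D.isCompact_skeleton hF).ne_univ
    exact ⟨{p}, by simpa [PairwiseSeparated] using hp, by simp⟩
  | insert e T heT ih =>
    induction e with
    | h u v =>
    obtain ⟨huv, hT⟩ := Finset.insert_subset_iff.mp hT
    rw [Finset.mem_sdiff, ← Finset.mem_coe, hE] at huv
    obtain ⟨Q, hQ, hcard⟩ := ih hT
    have hTF : ((T ∪ F : Finset (Sym2 V)) : Set (Sym2 V)) ⊆ G.edgeSet := by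
      rw [← hE, Finset.coe_subset]
      exact Finset.union_subset (hT.trans Finset.sdiff_subset) hFE
    obtain ⟨Q', hQ', hcard'⟩ := hQ.exists_card_succ_le (D.isCompact_skeleton hTF).isClosed
      (D.isArc_edgeArc huv.1)
      (D.skeleton_inter_edgeArc hTF huv.1 (Finset.notMem_union.mpr ⟨heT, huv.2⟩))
      ((D.joinedIn_skeleton hF (hFG u v huv.1)).mono (D.skeleton_mono Finset.subset_union_right))
    refine ⟨Q', ?_, ?_⟩
    · rwa [Finset.insert_union, skeleton_insert]
    · rw [Finset.card_insert_of_notMem heT]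
      exact (Nat.add_le_add_right hcard 1).trans hcard'

lemma hasLog_edgeArc (he : e ∈ G.edgeSet) {g : ℂ → ℂ} (hg : ContinuousOn g (D.edgeArc e))
    (hg0 : ∀ z ∈ D.edgeArc e, g z ≠ 0) : HasLog (D.edgeArc e) g := by
  induction e with
  | h u v => exact (D.isArc_edgeArc he).hasLog hg hg0

lemma hasLog_skeleton_of_card_le_two (hE : (E : Set (Sym2 V)) ⊆ G.edgeSet) (hcard : E.card ≤ 2)
    {g : ℂ → ℂ} (hg : ContinuousOn g (D.skeleton E)) (hg0 : ∀ z ∈ D.skeleton E, g z ≠ 0) :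
    HasLog (D.skeleton E) g := by
  classical
  have harc : ∀ e ∈ E, HasLog (D.edgeArc e) g := fun e he =>
    have hsub : D.edgeArc e ⊆ D.skeleton E := subset_union_of_subset_right
      (subset_biUnion_of_mem (u := D.edgeArc) he) _
    D.hasLog_edgeArc (hE he) (hg.mono hsub) fun z hz => hg0 z (hsub hz)
  have hclosed : ∀ e ∈ E, IsClosed (D.edgeArc e) := fun e he =>
    (D.isCompact_edgeArc (hE he)).isClosed
  rw [skeleton, union_comm]
  refine HasLog.union_of_finite ?_ (E.finite_toSet.isClosed_biUnion hclosed) (finite_range _)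
    fun z hz => hg0 z (Or.inl hz)
  interval_cases h : E.card
  · simp [Finset.card_eq_zero.mp h, HasLog]
  · obtain ⟨e, rfl⟩ := Finset.card_eq_one.mp h
    simpa using harc e
  · obtain ⟨e, e', hne, rfl⟩ := Finset.card_eq_two.mp h
    rw [Finset.set_biUnion_insert, Finset.set_biUnion_singleton]
    have he : e ∈ ({e, e'} : Finset (Sym2 V)) := Finset.mem_insert_self e {e'}
    have he' : e' ∈ ({e, e'} : Finset (Sym2 V)) := by simp
    exact (harc e he).union_of_isClosed (harc e' he') (hclosed e he) (hclosed e' he')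
      (D.subsingleton_edgeArc_inter_edgeArc (hE he) (hE he') hne).isPreconnected

lemma isPreconnected_compl_skeleton (hE : (E : Set (Sym2 V)) ⊆ G.edgeSet) (hcard : E.card ≤ 2) :
    IsPreconnected (D.skeleton E)ᶜ := by
  refine isPreconnected_of_forall_pair fun p hp q hq => ?_
  have hpq : JoinedIn (D.skeleton E)ᶜ p q :=
    (hasLog_div_iff_joinedIn (D.isCompact_skeleton hE) hp hq).mp <|
      D.hasLog_skeleton_of_card_le_two hE hcard
        (ContinuousOn.div (by fun_prop) (by fun_prop) fun z => sub_ne_zero_of_notMem hp)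
        fun z hz => div_ne_zero (sub_ne_zero_of_notMem hq hz) (sub_ne_zero_of_notMem hp hz)
  exact ⟨_, pathComponentIn_subset, mem_pathComponentIn_self hp, hpq,
    (isPathConnected_pathComponentIn hp).isConnected.isPreconnected⟩

open scoped Classical in
/-- The arc of `e` lies on the boundary of the face containing `q`, in the drawing of the edges
in `E`: deleting `e` merges the arc into that face. -/
def Borders (E : Finset (Sym2 V)) (e : Sym2 V) (q : ℂ) : Prop :=
  ∃ z ∈ D.openArc e, JoinedIn (D.skeleton (E.erase e))ᶜ z q

open scoped Classical in
theorem card_filter_borders_le_two (hE : (E : Set (Sym2 V)) ⊆ G.edgeSet) {Q : Finset ℂ}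
    (hQ : PairwiseSeparated (D.skeleton E) Q) (he : e ∈ E) :
    (Q.filter fun q => D.Borders E e q).card ≤ 2 := by
  have hEe : ((E.erase e : Finset (Sym2 V)) : Set (Sym2 V)) ⊆ G.edgeSet :=
    (Finset.coe_subset.mpr (E.erase_subset e)).trans hE
  have hQe : PairwiseSeparated (D.skeleton (E.erase e) ∪ D.edgeArc e)
      ↑(Q.filter fun q => D.Borders E e q) := by
    rw [← skeleton_insert, Finset.insert_erase he]
    exact hQ.mono Subset.rfl (Finset.filter_subset _ Q)
      ((Finset.coe_subset.mpr (Finset.filter_subset _ Q)).trans hQ.1)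
  have harc : D.openArc e ⊆ (D.skeleton (E.erase e))ᶜ :=
    (D.disjoint_openArc_skeleton hEe (hE he) (E.notMem_erase e)).subset_compl_right
  have hjoin : ∀ p ∈ Q.filter fun q => D.Borders E e q, ∀ q ∈ Q.filter fun q => D.Borders E e q,
      JoinedIn (D.skeleton (E.erase e))ᶜ p q := by
    intro p hp q hq
    obtain ⟨-, z, hz, hzp⟩ := Finset.mem_filter.mp hp
    obtain ⟨-, w, hw, hwq⟩ := Finset.mem_filter.mp hq
    have hzw := (D.isPathConnected_openArc (hE he)).joinedIn z hz w hw
    exact hzp.symm.trans ((hzw.mono harc).trans hwq)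
  induction e with
  | h u v =>
    exact hQe.card_le_two (D.isCompact_skeleton hEe) (D.isArc_edgeArc (hE he))
      (D.skeleton_inter_edgeArc hEe (hE he) (E.notMem_erase _)) hjoin

open scoped Classical in
lemma compl_skeleton_borders_subset (hE : (E : Set (Sym2 V)) ⊆ G.edgeSet) {q : ℂ}
    (hq : q ∉ D.skeleton E)
    (hpre : IsPreconnected (D.skeleton (E.filter fun e => D.Borders E e q))ᶜ) :
    (D.skeleton (E.filter fun e => D.Borders E e q))ᶜ ⊆ (D.skeleton E)ᶜ := by
  set B := E.filter fun e => D.Borders E e q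
  have hBE : B ⊆ E := Finset.filter_subset _ E
  have hopen : ∀ {B : Finset (Sym2 V)}, B ⊆ E → IsOpen (D.skeleton B)ᶜ := fun h =>
    (D.isCompact_skeleton ((Finset.coe_subset.mpr h).trans hE)).isClosed.isOpen_compl
  refine (hpre.subset_of_closure_inter_subset ((hopen Subset.rfl).pathComponentIn q)
    ⟨q, fun h => hq (D.skeleton_mono hBE h), mem_pathComponentIn_self hq⟩ ?_).trans
    pathComponentIn_subset
  rintro z ⟨hz, hzB⟩
  refine joinedIn_of_mem_closure (hopen Subset.rfl) hz fun hzE => hzB ?_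
  rcases hzE with hzp | hzE
  · exact Or.inl hzp
  obtain ⟨e, he, hze⟩ := mem_iUnion₂.mp hzE
  have hzo := D.mem_openArc_of_mem_edgeArc hze hzB
  have hzEe : z ∈ (D.skeleton (E.erase e))ᶜ :=
    disjoint_left.mp (D.disjoint_openArc_skeleton
      ((Finset.coe_subset.mpr (E.erase_subset e)).trans hE) (hE he) (E.notMem_erase e)) hzo
  have hqz : JoinedIn (D.skeleton (E.erase e))ᶜ q z :=
    joinedIn_of_mem_closure (hopen (E.erase_subset e)) (closure_mono (pathComponentIn_mono
      (compl_subset_compl.mpr (D.skeleton_mono (E.erase_subset e)))) hz) hzEe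
  exact Or.inr (mem_biUnion (Finset.mem_filter.mpr ⟨he, z, hzo, hqz.symm⟩) hze)

open scoped Classical in
theorem three_le_card_filter_borders (hE : (E : Set (Sym2 V)) ⊆ G.edgeSet) (hcard : 3 ≤ E.card)
    {q : ℂ} (hq : q ∉ D.skeleton E) : 3 ≤ (E.filter fun e => D.Borders E e q).card := by
  by_contra! hlt
  have hB : ((E.filter fun e => D.Borders E e q : Finset (Sym2 V)) : Set (Sym2 V)) ⊆ G.edgeSet :=
    (Finset.coe_subset.mpr (Finset.filter_subset _ E)).trans hE
  have hsub := D.compl_skeleton_borders_subset hE hq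
    (D.isPreconnected_compl_skeleton hB (Nat.le_of_lt_succ hlt))
  suffices E ⊆ E.filter fun e => D.Borders E e q by
    have := Finset.card_le_card this
    lia
  intro e he
  by_contra heB
  obtain ⟨z, hz⟩ := (D.isPathConnected_openArc (hE he)).nonempty
  exact hsub (disjoint_left.mp (D.disjoint_openArc_skeleton hB (hE he) heB) hz)
    (Or.inr (mem_biUnion he hz.1))

theorem card_mul_three_le_card_mul_two (hE : (E : Set (Sym2 V)) ⊆ G.edgeSet) (hcard : 3 ≤ E.card)
    {Q : Finset ℂ} (hQ : PairwiseSeparated (D.skeleton E) Q) : Q.card * 3 ≤ E.card * 2 := by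
  classical
  exact Finset.card_mul_le_card_mul (fun q e => D.Borders E e q)
    (fun q hq => D.three_le_card_filter_borders hE hcard (hQ.1 hq))
    fun e he => D.card_filter_borders_le_two hE hQ he

theorem card_edgeSet_add_six_le (D : PlanarDrawing G) (hV : 3 ≤ Fintype.card V) :
    G.edgeSet.ncard + 6 ≤ 3 * Fintype.card V := by
  classical
  have : Nonempty V := Fintype.card_pos_iff.mp (by lia)
  rw [← SimpleGraph.coe_edgeFinset, ncard_coe_finset]
  by_cases hcard : 3 ≤ G.edgeFinset.card
  · obtain ⟨Q, hQ, hfaces⟩ := D.exists_pairwiseSeparated_skeleton G.coe_edgeFinset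
    have := D.card_mul_three_le_card_mul_two G.coe_edgeFinset.subset hcard hQ
    lia
  · lia

/-- The drawing of `G.comap f` that keeps the vertices in the range of `f` and the arcs between
them. -/
def comap {W : Type} [Fintype W] (f : W ↪ V) : PlanarDrawing (G.comap f) where
  ρ := D.ρ ∘ f
  inj := D.inj.comp f.injective
  arc e := D.arc (e.map f)
  arc_isArc u v h := D.arc_isArc (f u) (f v) h
  vertex_mem e he w hw := by
    obtain ⟨w', hw', hf⟩ := Sym2.mem_map.mp (D.vertex_mem (e.map f)
      ((SimpleGraph.Embedding.comap f G).map_mem_edgeSet_iff.mpr he) (f w) hw)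
    rwa [← f.injective hf]
  arcs_cross e he e' he' hne x hx := by
    obtain ⟨w, hw, hw', rfl⟩ := D.arcs_cross _
      ((SimpleGraph.Embedding.comap f G).map_mem_edgeSet_iff.mpr he) _
      ((SimpleGraph.Embedding.comap f G).map_mem_edgeSet_iff.mpr he')
      ((Sym2.map.injective f.injective).ne hne) x hx
    obtain ⟨v, hv, rfl⟩ := Sym2.mem_map.mp hw
    obtain ⟨v', hv', hf⟩ := Sym2.mem_map.mp hw'
    exact ⟨v, hv, f.injective hf ▸ hv', rfl⟩

end PlanarDrawing

end Drawing

/-! ### Degeneracy and greedy packing -/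

section SparseGraphs

variable {V W : Type*} {G : SimpleGraph V} {H : SimpleGraph W} {S T : Finset V} {v : V}

/-- Every induced subgraph on at least three vertices satisfies the edge bound `|E| ≤ 3 |V| - 6`
that Euler's formula gives for planar graphs. -/
def EulerSparse (G : SimpleGraph V) : Prop :=
  ∀ S : Finset V, 3 ≤ S.card → (G.induce (S : Set V)).edgeSet.ncard + 6 ≤ 3 * S.card

theorem PlanarDrawing.eulerSparse {V : Type} [Fintype V] {G : SimpleGraph V}
    (D : PlanarDrawing G) : EulerSparse G := fun S hS => by
  simpa using! (D.comap (Function.Embedding.subtype (· ∈ S))).card_edgeSet_add_six_le (by simpa)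

open scoped Classical in
/-- The number of neighbours of `v` in `S`. -/
noncomputable def degreeIn (G : SimpleGraph V) (S : Finset V) (v : V) : ℕ :=
  (S.filter (G.Adj v)).card

open scoped Classical in
/-- The vertices of `S` other than `v` that are not adjacent to `v`. -/
noncomputable def nonNeighborsIn (G : SimpleGraph V) (S : Finset V) (v : V) : Finset V :=
  S.filter fun w => w ≠ v ∧ ¬G.Adj v w

lemma mem_nonNeighborsIn {w : V} : w ∈ nonNeighborsIn G S v ↔ w ∈ S ∧ w ≠ v ∧ ¬G.Adj v w := by
  classical exact Finset.mem_filter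

lemma nonNeighborsIn_subset : nonNeighborsIn G S v ⊆ S := by
  classical exact Finset.filter_subset _ S

lemma degreeIn_mono (h : S ⊆ T) : degreeIn G S v ≤ degreeIn G T v := by
  classical exact Finset.card_le_card (Finset.filter_subset_filter _ h)

lemma degreeIn_add_card_nonNeighborsIn (hv : v ∈ S) :
    degreeIn G S v + (nonNeighborsIn G S v).card + 1 = S.card := by
  classical
  have hnon : S.filter (fun w => ¬G.Adj v w) = insert v (nonNeighborsIn G S v) := by
    ext w
    rw [Finset.mem_filter, Finset.mem_insert, mem_nonNeighborsIn]
    rcases eq_or_ne w v with rfl | hw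
    · simp [hv]
    · simp [hw]
  have hvR : v ∉ nonNeighborsIn G S v := fun h => (mem_nonNeighborsIn.mp h).2.1 rfl
  have hsplit := Finset.card_filter_add_card_filter_not (s := S) (G.Adj v)
  rwa [hnon, Finset.card_insert_of_notMem hvR] at hsplit

lemma sum_degreeIn_eq_two_mul_ncard_edgeSet (G : SimpleGraph V) (S : Finset V) :
    ∑ v ∈ S, degreeIn G S v = 2 * (G.induce (S : Set V)).edgeSet.ncard := by
  classical
  rw [← SimpleGraph.coe_edgeFinset, ncard_coe_finset,
    ← SimpleGraph.sum_degrees_eq_twice_card_edges, ← Finset.sum_coe_sort]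
  refine Finset.sum_congr rfl fun v _ => ?_
  rw [← SimpleGraph.card_neighborFinset_eq_degree, degreeIn,
    ← Finset.card_map (Function.Embedding.subtype (· ∈ (S : Set V)))]
  congr 1
  ext w
  simp [and_comm]

lemma sum_degreeIn_erase_add_le [DecidableEq V] (hv : v ∈ S) :
    ∑ u ∈ S.erase v, degreeIn G (S.erase v) u + 2 * degreeIn G S v ≤ ∑ u ∈ S, degreeIn G S u := by
  classical
  have hdeg : ∀ u, degreeIn G S u = degreeIn G (S.erase v) u + if G.Adj v u then 1 else 0 := by
    intro u
    have hvu : v ∉ (S.erase v).filter (G.Adj u) := by simp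
    nth_rw 1 [degreeIn, ← Finset.insert_erase hv]
    rw [Finset.filter_insert, G.adj_comm u v]
    split_ifs
    · exact Finset.card_insert_of_notMem hvu
    · rfl
  have hcount : ∑ u ∈ S.erase v, (if G.Adj v u then 1 else 0) = degreeIn G S v := by
    rw [hdeg v, if_neg (G.irrefl), add_zero, degreeIn, Finset.card_filter]
  have hsum : ∑ u ∈ S.erase v, degreeIn G S u =
      ∑ u ∈ S.erase v, degreeIn G (S.erase v) u + degreeIn G S v := by
    rw [Finset.sum_congr rfl fun u _ => hdeg u, Finset.sum_add_distrib, hcount]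
  have := Finset.sum_erase_add S (degreeIn G S) hv
  lia

lemma EulerSparse.sum_degreeIn_add_le (hG : EulerSparse G) (hS : 3 ≤ S.card) :
    ∑ v ∈ S, degreeIn G S v + 12 ≤ 6 * S.card := by
  have := hG S hS
  rw [sum_degreeIn_eq_two_mul_ncard_edgeSet]
  lia

lemma EulerSparse.exists_degreeIn_le (hG : EulerSparse G) {k : ℕ} (hS : S.Nonempty) (hk : 1 ≤ k)
    (hcard : 6 * S.card < 12 + (k + 1) * S.card) : ∃ v ∈ S, degreeIn G S v ≤ k := by
  rcases Nat.lt_or_ge S.card 3 with hS3 | hS3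
  · obtain ⟨v, hv⟩ := hS
    have := degreeIn_add_card_nonNeighborsIn (G := G) hv
    exact ⟨v, hv, by lia⟩
  · by_contra! hlarge
    have := Finset.card_nsmul_le_sum S (degreeIn G S) (k + 1) hlarge
    have := hG.sum_degreeIn_add_le hS3
    rw [smul_eq_mul] at *
    lia

/-- Every nonempty finite set of vertices contains a vertex with at most `b` neighbours in that
set. -/
def IsDegenerate (G : SimpleGraph V) (b : ℕ) : Prop :=
  ∀ S : Finset V, S.Nonempty → ∃ v ∈ S, degreeIn G S v ≤ b

/-- The graph `H` can be placed injectively on the vertices of `G` without sharing an edge with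
`G`. -/
def Packs (G : SimpleGraph V) (H : SimpleGraph W) : Prop :=
  ∃ f : W ↪ V, ∀ a b, H.Adj a b → ¬G.Adj (f a) (f b)

/-- On `T`, the map `f` is injective and sends no edge of `H` to an edge of `G`. -/
def PacksOn (G : SimpleGraph V) (H : SimpleGraph W) (f : W → V) (T : Set W) : Prop :=
  T.Pairwise fun a b => f a ≠ f b ∧ (H.Adj a b → ¬G.Adj (f a) (f b))

lemma PacksOn.packs {f : W → V} (hf : PacksOn G H f univ) : Packs G H :=
  ⟨⟨f, fun a b hab => by_contra fun hne => (hf (mem_univ a) (mem_univ b) hne).1 hab⟩,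
    fun a b hab => (hf (mem_univ a) (mem_univ b) hab.ne).2 hab⟩

lemma PacksOn.update [DecidableEq W] {f : W → V} {T : Set W} (hf : PacksOn G H f T) {u : W}
    {x : V} (hu : u ∉ T) (hx : ∀ w ∈ T, f w ≠ x)
    (hadj : ∀ w ∈ T, H.Adj u w → ¬G.Adj (f w) x) :
    PacksOn G H (Function.update f u x) (insert u T) := by
  have heq : ∀ w ∈ T, Function.update f u x w = f w := fun w hw =>
    Function.update_of_ne (ne_of_mem_of_not_mem hw hu) x f
  refine Set.Pairwise.insert (fun a ha b hb hab => ?_) fun w hw _ => ?_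
  · rw [heq a ha, heq b hb]
    exact hf ha hb hab
  · rw [heq w hw, Function.update_self]
    exact ⟨⟨(hx w hw).symm, fun h h' => hadj w hw h h'.symm⟩,
      hx w hw, fun h => hadj w hw h.symm⟩

theorem exists_packsOn_of_degreeIn_le [Nonempty V] {b d : ℕ} (hH : IsDegenerate H b)
    (hS : ∀ v ∈ S, degreeIn G S v ≤ d) (T : Finset W) (hcard : T.card + b * d ≤ S.card) :
    ∃ f, MapsTo f (T : Set W) S ∧ PacksOn G H f T := by
  classical
  induction hT : T.card generalizing T with
  | zero =>
    rw [Finset.card_eq_zero] at hT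
    subst hT
    exact ⟨fun _ => Classical.arbitrary V, by simp [MapsTo], by simp [PacksOn]⟩
  | succ n ih =>
    obtain ⟨u, hu, hub⟩ := hH T (Finset.card_pos.mp (by lia))
    have hTu := Finset.card_erase_add_one hu
    obtain ⟨f, hfS, hf⟩ := ih (T.erase u) (by lia) (by lia)
    let B := (T.filter (H.Adj u)).biUnion fun w => S.filter (G.Adj (f w))
    have hB : B.card ≤ b * d := by
      refine (Finset.card_biUnion_le_card_mul _ _ d fun w hw => ?_).trans
        (Nat.mul_le_mul_right d hub)
      rw [Finset.mem_filter] at hw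
      exact hS (f w) (hfS (Finset.mem_erase.mpr ⟨hw.2.ne', hw.1⟩))
    obtain ⟨x, hxS, hx⟩ : ∃ x ∈ S, x ∉ (T.erase u).image f ∪ B := by
      refine Finset.exists_mem_notMem_of_card_lt_card ?_
      have := Finset.card_union_le ((T.erase u).image f) B
      have := Finset.card_image_le (s := T.erase u) (f := f)
      lia
    rw [Finset.mem_union, not_or] at hx
    have hfx := hf.update (u := u) (x := x) (by simp)
      (fun w hw h => hx.1 (Finset.mem_image.mpr ⟨w, hw, h⟩))
      fun w hw huw h => hx.2 (Finset.mem_biUnion.mpr ⟨w, Finset.mem_filter.mpr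
        ⟨Finset.mem_of_mem_erase hw, huw⟩, Finset.mem_filter.mpr ⟨hxS, h⟩⟩)
    refine ⟨Function.update f u x, fun w hw => ?_, ?_⟩
    · rcases eq_or_ne w u with rfl | hwu
      · rwa [Function.update_self]
      · rw [Function.update_of_ne hwu]
        exact hfS (Finset.mem_erase.mpr ⟨hwu, hw⟩)
    · rwa [← Finset.coe_insert, Finset.insert_erase hu] at hfx

lemma two_mul_sum_div_add_one {b : ℕ} (hb : 0 < b) (N : ℕ) :
    2 * b * ∑ j ∈ Finset.range N, (j / b + 1) = N * (N + b) + N % b * (b - N % b) := by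
  induction N with
  | zero => simp
  | succ N ih =>
    rw [Finset.sum_range_succ, mul_add, ih]
    have hdiv := Nat.div_add_mod N b
    obtain ⟨s, hs⟩ := Nat.exists_eq_add_of_lt (Nat.mod_lt N hb)
    have hmod : (N + 1) % b = (N % b + 1) % b := by simp
    rcases Nat.eq_zero_or_pos s with rfl | hs0
    · rw [hmod, show N % b + 1 = b by lia, Nat.mod_self, show b - N % b = 1 by lia]
      generalize N / b = q, N % b = r at *
      subst hs
      nlinarith
    · rw [hmod, Nat.mod_eq_of_lt (by lia : N % b + 1 < b),
        show b - N % b = s + 1 by lia, show b - (N % b + 1) = s by lia]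
      generalize N / b = q, N % b = r at *
      subst hs
      nlinarith

-- If greedy placement fails, every set of at least `card W + b * d` vertices has one of degree
-- above `d`; peeling off such vertices one at a time bounds the number of edges from below.
lemma two_mul_sum_div_le_sum_degreeIn [Nonempty V] [Fintype W] {b : ℕ} (hH : IsDegenerate H b)
    (hno : ¬Packs G H) {N : ℕ} (S : Finset V)
    (hS : S.card + 1 = Fintype.card W + N) :
    2 * ∑ j ∈ Finset.range N, (j / b + 1) ≤ ∑ v ∈ S, degreeIn G S v := by
  classical
  induction N generalizing S with
  | zero => simp
  | succ N ih =>
    obtain ⟨v, hv, hdeg⟩ : ∃ v ∈ S, N / b + 1 ≤ degreeIn G S v := by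
      by_contra! hsmall
      have hb := Nat.mul_div_le N b
      obtain ⟨f, -, hf⟩ := exists_packsOn_of_degreeIn_le hH
        (fun v hv => Nat.le_of_lt_succ (hsmall v hv)) Finset.univ
        (by rw [Finset.card_univ]; lia)
      exact hno (PacksOn.packs (by rwa [Finset.coe_univ] at hf))
    have := Finset.card_erase_add_one hv
    have := ih (S.erase v) (by lia)
    have := sum_degreeIn_erase_add_le (G := G) hv
    rw [Finset.sum_range_succ]
    lia

theorem packs_of_isDegenerate [Nonempty V] [Fintype W] {b N : ℕ} (hb : 0 < b)
    (hH : IsDegenerate H b) (hS : S.card + 1 = Fintype.card W + N)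
    (hsum : b * ∑ v ∈ S, degreeIn G S v < N * (N + b)) :
    Packs G H := by
  by_contra hno
  have hle := Nat.mul_le_mul_left b (two_mul_sum_div_le_sum_degreeIn hH hno S hS)
  have := two_mul_sum_div_add_one hb N
  lia

lemma EulerSparse.isDegenerate_five (hG : EulerSparse G) : IsDegenerate G 5 := fun _ hS =>
  hG.exists_degreeIn_le hS (by norm_num) (by lia)

lemma EulerSparse.isDegenerate_four [Fintype V] (hG : EulerSparse G)
    (hV : Fintype.card V ≤ 11) : IsDegenerate G 4 := fun S hS =>
  hG.exists_degreeIn_le hS (by norm_num) (by have := S.card_le_univ; lia)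

theorem EulerSparse.packs_of_eight_le [Fintype V] [Fintype W] (hG : EulerSparse G)
    (hH : EulerSparse H) (hW : 8 ≤ Fintype.card W)
    (hcard : 4 * Fintype.card W ≤ Fintype.card V) : Packs G H := by
  have : Nonempty V := Fintype.card_pos_iff.mp (by lia)
  obtain ⟨S, -, hS⟩ := Finset.exists_subset_card_eq (s := (Finset.univ : Finset V)) hcard
  have hsum := hG.sum_degreeIn_add_le (S := S) (by lia)
  generalize hm : Fintype.card W = m at *
  rcases Nat.lt_or_ge m 12 with hm' | hm'
  · refine packs_of_isDegenerate four_pos (hH.isDegenerate_four (by lia))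
      (S := S) (N := 3 * m + 1) (by lia) ?_
    nlinarith
  · refine packs_of_isDegenerate (by norm_num) hH.isDegenerate_five
      (S := S) (N := 3 * m + 1) (by lia) ?_
    nlinarith

end SparseGraphs

/-! ### Near-independent sets -/

section SmallGraphs

variable {V W : Type*} {G : SimpleGraph V} {H : SimpleGraph W} {S T U : Finset V} {v : V}
  {k t N : ℕ}

/-- `S` contains an independent set of size `k` together with a further vertex having at most `t`
neighbours in it. -/
def NearIndep (G : SimpleGraph V) (S : Finset V) (k t : ℕ) : Prop :=
  ∃ I ⊆ S, G.IsNIndepSet k I ∧ ∃ x ∈ S, x ∉ I ∧ degreeIn G I x ≤ t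

lemma NearIndep.mono (h : NearIndep G S k t) (hST : S ⊆ T) : NearIndep G T k t :=
  let ⟨I, hIS, hI, x, hx, hxI⟩ := h
  ⟨I, hIS.trans hST, hI, x, hST hx, hxI⟩

lemma nearIndep_of_card_eq (h : ∀ S, S.card = N → NearIndep G S k t) (hS : N ≤ S.card) :
    NearIndep G S k t :=
  let ⟨T, hTS, hT⟩ := Finset.exists_subset_card_eq hS
  (h T hT).mono hTS

lemma isNIndepSet_insert [DecidableEq V] (hS : G.IsNIndepSet k S) (hv : v ∉ S)
    (hdeg : degreeIn G S v = 0) : G.IsNIndepSet (k + 1) (insert v S) := by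
  classical
  rw [degreeIn, Finset.card_eq_zero, Finset.filter_eq_empty_iff] at hdeg
  refine ⟨?_, by rw [Finset.card_insert_of_notMem hv, hS.card_eq]⟩
  rw [Finset.coe_insert]
  exact hS.isIndepSet.insert fun w hw _ => ⟨hdeg hw, fun h => hdeg hw h.symm⟩

lemma degreeIn_insert_of_not_adj [DecidableEq V] {x : V} (h : ¬G.Adj x v) :
    degreeIn G (insert v S) x = degreeIn G S x := by
  classical
  rw [degreeIn, Finset.filter_insert, if_neg h, degreeIn]

lemma degreeIn_add_degreeIn_le (hST : Disjoint S T) (hS : S ⊆ U) (hT : T ⊆ U) (v : V) :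
    degreeIn G S v + degreeIn G T v ≤ degreeIn G U v := by
  classical
  rw [degreeIn, degreeIn, ← Finset.card_union_of_disjoint (Finset.disjoint_filter_filter hST),
    ← Finset.filter_union]
  exact degreeIn_mono (Finset.union_subset hS hT)

lemma NearIndep.cons (h : NearIndep G (nonNeighborsIn G S v) k t) (hv : v ∈ S) :
    NearIndep G S (k + 1) t := by
  classical
  obtain ⟨I, hIR, hI, x, hxR, hxI, hdeg⟩ := h
  have hx := mem_nonNeighborsIn.mp hxR
  refine ⟨insert v I, Finset.insert_subset hv (hIR.trans nonNeighborsIn_subset),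
    isNIndepSet_insert hI (fun hvI => (mem_nonNeighborsIn.mp (hIR hvI)).2.1 rfl) ?_, x, hx.1,
    by simp [hx.2.1, hxI], ?_⟩
  · rw [degreeIn, Finset.card_eq_zero, Finset.filter_eq_empty_iff]
    exact fun w hw => (mem_nonNeighborsIn.mp (hIR hw)).2.2
  · rwa [degreeIn_insert_of_not_adj fun hxv => hx.2.2 hxv.symm]

lemma nearIndep_succ_of_degreeIn_add_le (h : ∀ S, N ≤ S.card → NearIndep G S k t) (hv : v ∈ S)
    (hdeg : degreeIn G S v + N + 1 ≤ S.card) : NearIndep G S (k + 1) t := by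
  have := degreeIn_add_card_nonNeighborsIn (G := G) hv
  exact (h _ (by lia)).cons hv

lemma EulerSparse.nearIndep_succ (hG : EulerSparse G)
    (h : ∀ S, N ≤ S.card → NearIndep G S k t) (S : Finset V) (hS : N + 6 ≤ S.card) :
    NearIndep G S (k + 1) t := by
  obtain ⟨v, hv, hdeg⟩ := hG.isDegenerate_five S (Finset.card_pos.mp (by lia))
  exact nearIndep_succ_of_degreeIn_add_le h hv (by lia)

lemma NearIndep.succ_succ (h : NearIndep G S k 0) (hS : k + 2 ≤ S.card) :
    NearIndep G S (k + 1) (k + 1) := by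
  classical
  obtain ⟨I, hIS, hI, x, hx, hxI, hdeg⟩ := h
  have hI' := isNIndepSet_insert hI hxI (Nat.le_zero.mp hdeg)
  obtain ⟨y, hyS, hy⟩ := Finset.exists_mem_notMem_of_card_lt_card
    (s := insert x I) (t := S) (by rw [hI'.card_eq]; lia)
  exact ⟨insert x I, Finset.insert_subset hx hIS, hI', y, hyS, hy,
    (Finset.card_filter_le _ _).trans hI'.card_eq.le⟩

lemma nearIndep_zero_zero (S : Finset V) (hS : 1 ≤ S.card) : NearIndep G S 0 0 :=
  let ⟨x, hx⟩ := Finset.card_pos.mp hS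
  ⟨∅, by simp, by simp [SimpleGraph.isNIndepSet_iff], x, hx, by simp, by simp [degreeIn]⟩

lemma nearIndep_one_one (S : Finset V) (hS : 2 ≤ S.card) : NearIndep G S 1 1 :=
  (nearIndep_zero_zero S (by lia)).succ_succ hS

lemma EulerSparse.nearIndep_one_zero (hG : EulerSparse G) (S : Finset V) (hS : 5 ≤ S.card) :
    NearIndep G S 1 0 := by
  refine nearIndep_of_card_eq (fun T hT => ?_) hS
  obtain ⟨v, hv, hdeg⟩ := hG.exists_degreeIn_le (k := 3) (S := T)
    (Finset.card_pos.mp (by lia)) (by norm_num) (by lia)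
  exact nearIndep_succ_of_degreeIn_add_le nearIndep_zero_zero hv (by lia)

lemma EulerSparse.nearIndep_succ_of_ten_le (hG : EulerSparse G)
    (h : ∀ S, 5 ≤ S.card → NearIndep G S k t) (S : Finset V) (hS : 10 ≤ S.card) :
    NearIndep G S (k + 1) t := by
  refine nearIndep_of_card_eq (fun T hT => ?_) hS
  obtain ⟨v, hv, hdeg⟩ := hG.exists_degreeIn_le (k := 4) (S := T)
    (Finset.card_pos.mp (by lia)) (by norm_num) (by lia)
  exact nearIndep_succ_of_degreeIn_add_le h hv (by lia)

lemma EulerSparse.nearIndep_two_zero (hG : EulerSparse G) :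
    ∀ S, 10 ≤ S.card → NearIndep G S 2 0 :=
  hG.nearIndep_succ_of_ten_le hG.nearIndep_one_zero

lemma EulerSparse.nearIndep_three_two (hG : EulerSparse G) :
    ∀ S, 10 ≤ S.card → NearIndep G S 3 2 :=
  hG.nearIndep_succ_of_ten_le fun S hS => (hG.nearIndep_one_zero S hS).succ_succ (by lia)

lemma card_nonNeighborsIn_nonNeighborsIn_le_one (hS : ¬NearIndep G S 3 1) {x : V} (hv : v ∈ S)
    (hx : x ∈ nonNeighborsIn G S v) :
    (nonNeighborsIn G (nonNeighborsIn G S v) x).card ≤ 1 := by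
  by_contra! hlarge
  exact hS (((nearIndep_one_one _ hlarge).cons hx).cons hv)

lemma EulerSparse.five_le_degreeIn (hG : EulerSparse G) (hno : ¬NearIndep G S 3 1)
    (hS : S.card = 12) (hv : v ∈ S) : 5 ≤ degreeIn G S v := by
  have hcard := degreeIn_add_card_nonNeighborsIn (G := G) hv
  set R := nonNeighborsIn G S v
  have hdense : ∀ x ∈ R, R.card - 2 ≤ degreeIn G R x := fun x hx => by
    have := degreeIn_add_card_nonNeighborsIn (G := G) hx
    have := card_nonNeighborsIn_nonNeighborsIn_le_one hno hv hx
    lia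
  by_contra! hlow
  have hlower := Finset.card_nsmul_le_sum R (degreeIn G R) _ hdense
  have hupper := hG.sum_degreeIn_add_le (S := R) (by lia)
  obtain ⟨r, hr⟩ := Nat.exists_eq_add_of_le (show 7 ≤ R.card by lia)
  rw [hr, smul_eq_mul, show 7 + r - 2 = r + 5 by lia] at hlower
  nlinarith

lemma EulerSparse.degreeIn_eq_five (hG : EulerSparse G) (hno : ¬NearIndep G S 3 1)
    (hS : S.card = 12) : ∀ v ∈ S, degreeIn G S v = 5 := by
  have hle : ∀ v ∈ S, 5 ≤ degreeIn G S v := fun v hv => hG.five_le_degreeIn hno hS hv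
  have hsum := hG.sum_degreeIn_add_le (S := S) (by lia)
  have hconst : ∑ _v ∈ S, 5 = 60 := by rw [Finset.sum_const, hS, smul_eq_mul]
  refine fun v hv => ((Finset.sum_eq_sum_iff_of_le hle).mp ?_ v hv).symm
  exact (Finset.sum_le_sum hle).antisymm (by lia)

lemma degreeIn_filter_adj_add_card_le [DecidableRel G.Adj] (hno : ¬NearIndep G S 3 1) {x : V}
    (hv : v ∈ S) (hx : x ∈ nonNeighborsIn G S v) :
    degreeIn G (S.filter (G.Adj v)) x + S.card ≤ degreeIn G S v + degreeIn G S x + 3 := by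
  have hdisj : Disjoint (S.filter (G.Adj v)) (nonNeighborsIn G S v) :=
    Finset.disjoint_left.mpr fun _ h h' =>
      (mem_nonNeighborsIn.mp h').2.2 (Finset.mem_filter.mp h).2
  have := degreeIn_add_degreeIn_le (G := G) hdisj (Finset.filter_subset _ S)
    nonNeighborsIn_subset x
  have := degreeIn_add_card_nonNeighborsIn (G := G) hv
  have := degreeIn_add_card_nonNeighborsIn (G := G) hx
  have := card_nonNeighborsIn_nonNeighborsIn_le_one hno hv hx
  lia

lemma degreeIn_le_degreeIn_filter_adj_add [DecidableRel G.Adj] (hno : ¬NearIndep G S 3 1)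
    {x y : V} (hv : v ∈ S) (hx : x ∈ nonNeighborsIn G S v)
    (hy : y ∈ nonNeighborsIn G (nonNeighborsIn G S v) x) :
    degreeIn G S v ≤
      degreeIn G (S.filter (G.Adj v)) x + degreeIn G (S.filter (G.Adj v)) y := by
  classical
  obtain ⟨hyR, hyx, hxy⟩ := mem_nonNeighborsIn.mp hy
  obtain ⟨hxS, hxv, hvx⟩ := mem_nonNeighborsIn.mp hx
  obtain ⟨hyS, hyv, hvy⟩ := mem_nonNeighborsIn.mp hyR
  by_contra! hlt
  obtain ⟨w, hw, hwxy⟩ : ∃ w ∈ S.filter (G.Adj v),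
      w ∉ (S.filter (G.Adj v)).filter (G.Adj x) ∪ (S.filter (G.Adj v)).filter (G.Adj y) := by
    refine Finset.exists_mem_notMem_of_card_lt_card ((Finset.card_union_le _ _).trans_lt ?_)
    unfold degreeIn at hlt
    convert! hlt
  simp only [Finset.mem_union, Finset.mem_filter (s := S.filter _), hw, true_and, not_or] at hwxy
  obtain ⟨hwS, hvw⟩ := Finset.mem_filter.mp hw
  have hcommon := card_nonNeighborsIn_nonNeighborsIn_le_one hno hxS
    (mem_nonNeighborsIn.mpr ⟨hyS, hyx, hxy⟩)
  refine hvw.ne (Finset.card_le_one.mp hcommon v ?_ w ?_) <;> simp only [mem_nonNeighborsIn]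
  · exact ⟨⟨hv, hxv.symm, fun h => hvx h.symm⟩, hyv.symm, fun h => hvy h.symm⟩
  · exact ⟨⟨hwS, fun h => hvx (h ▸ hvw), hwxy.1⟩, fun h => hvy (h ▸ hvw), hwxy.2⟩

theorem EulerSparse.nearIndep_three_one (hG : EulerSparse G) (S : Finset V)
    (hS : 12 ≤ S.card) : NearIndep G S 3 1 := by
  classical
  refine nearIndep_of_card_eq (fun S hS => ?_) hS
  by_contra hno
  have hdeg := hG.degreeIn_eq_five hno hS
  obtain ⟨v, hv⟩ := Finset.card_pos.mp (show 0 < S.card by lia)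
  have hR := degreeIn_add_card_nonNeighborsIn (G := G) hv
  set R := nonNeighborsIn G S v
  have hfew : ∀ x ∈ R, degreeIn G (S.filter (G.Adj v)) x ≤ 1 := fun x hx => by
    have := degreeIn_filter_adj_add_card_le hno hv hx
    have := hdeg x (nonNeighborsIn_subset hx)
    have := hdeg v hv
    lia
  have hRcard : R.card = 6 := by
    have := hdeg v hv
    lia
  obtain ⟨x, hx, hxdeg⟩ := hG.exists_degreeIn_le (k := 4) (S := R)
    (Finset.card_pos.mp (by lia)) (by norm_num) (by lia)
  have := degreeIn_add_card_nonNeighborsIn (G := G) hx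
  obtain ⟨y, hy⟩ := Finset.card_pos.mp (show 0 < (nonNeighborsIn G R x).card by lia)
  have := degreeIn_le_degreeIn_filter_adj_add hno hv hx hy
  linarith [hdeg v hv, hfew x hx, hfew y (nonNeighborsIn_subset hy)]

lemma exists_embedding_extending [Fintype W] {I J : Finset V} {A : Finset W} {x : V} {u : W}
    (hW : Fintype.card W = I.card + 1) (hxI : x ∉ I) (huA : u ∉ A) (hJI : J ⊆ I)
    (hAJ : A.card ≤ J.card) :
    ∃ f : W ↪ V, f u = x ∧ (∀ a, a ≠ u → f a ∈ I) ∧ ∀ a ∈ A, f a ∈ J := by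
  classical
  obtain ⟨e⟩ : Nonempty (A ↪ J) := Function.Embedding.nonempty_of_card_le (by simpa)
  let f₀ : W → V := fun w => if hw : w ∈ A then e ⟨w, hw⟩ else x
  have hf₀u : f₀ u = x := dif_neg huA
  have hf₀A : ∀ w (hw : w ∈ A), f₀ w = e ⟨w, hw⟩ := fun w hw => dif_pos hw
  obtain ⟨g, hg⟩ : ∃ g : W ≃ (insert x I : Finset V), ∀ w ∈ insert u A, (g w : V) = f₀ w := by
    refine Finset.exists_equiv_extend_of_card_eq
      (by rw [hW, Finset.card_insert_of_notMem hxI]) ?_ ?_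
    · rw [Finset.image_subset_iff]
      grind
    · rw [Finset.coe_insert, Set.injOn_insert huA]
      refine ⟨fun a ha b hb hab => ?_, ?_⟩
      · rw [hf₀A a ha, hf₀A b hb] at hab
        exact congrArg Subtype.val (e.injective (Subtype.ext hab))
      · rintro ⟨a, ha, hax⟩
        rw [hf₀A a ha, hf₀u] at hax
        exact hxI (hax ▸ hJI (e _).2)
  have hgu : (g u : V) = x := (hg u (Finset.mem_insert_self _ _)).trans hf₀u
  refine ⟨g.toEmbedding.trans (Function.Embedding.subtype _), hgu, fun a hau => ?_,
    fun a ha => ?_⟩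
  · exact (Finset.mem_insert.mp (g a).2).resolve_left fun h =>
      hau (g.injective (Subtype.ext (h.trans hgu.symm)))
  · have hga : (g a : V) = e ⟨a, ha⟩ :=
      (hg a (Finset.mem_insert_of_mem ha)).trans (hf₀A a ha)
    exact Set.mem_of_eq_of_mem hga (e ⟨a, ha⟩).2

theorem NearIndep.packs [Fintype W] (h : NearIndep G S k t)
    (hW : Fintype.card W = k + 1) {u : W} (hu : degreeIn H Finset.univ u + t ≤ k) :
    Packs G H := by
  classical
  obtain ⟨I, -, hI, x, -, hxI, hdeg⟩ := h
  have hcard : (Finset.univ.filter (H.Adj u)).card ≤ (I.filter fun w => ¬G.Adj x w).card := by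
    have hsplit := Finset.card_filter_add_card_filter_not (s := I) (G.Adj x)
    rw [hI.card_eq] at hsplit
    unfold degreeIn at hu hdeg
    lia
  obtain ⟨f, hfu, hfI, hfA⟩ := exists_embedding_extending (by rw [hW, hI.card_eq]) hxI
    (fun h => H.irrefl (Finset.mem_filter.mp h).2) (Finset.filter_subset _ I) hcard
  have hxf : ∀ a, H.Adj u a → ¬G.Adj (f u) (f a) := fun a hua => by
    rw [hfu]
    exact (Finset.mem_filter.mp (hfA a (by simpa))).2
  refine ⟨f, fun a b hab => ?_⟩
  rcases eq_or_ne a u with rfl | hau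
  · exact hxf b hab
  rcases eq_or_ne b u with rfl | hbu
  · exact fun h => hxf a hab.symm h.symm
  · exact hI.isIndepSet (hfI a hau) (hfI b hbu) (f.injective.ne hab.ne)

lemma NearIndep.packs_of_zero [Fintype W] (h : NearIndep G S k 0)
    (hW : Fintype.card W = k + 1) : Packs G H := by
  obtain ⟨u⟩ := Fintype.card_pos_iff.mp (show 0 < Fintype.card W by lia)
  have := degreeIn_add_card_nonNeighborsIn (G := H) (Finset.mem_univ u)
  rw [Finset.card_univ] at this
  exact h.packs hW (u := u) (by lia)

lemma EulerSparse.packs_of_nearIndep [Fintype W] (hH : EulerSparse H) {d : ℕ}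
    (h : NearIndep G S k t) (hW : Fintype.card W = k + 1) (hd : 1 ≤ d)
    (hcard : 6 * (k + 1) < 12 + (d + 1) * (k + 1)) (hdt : d + t ≤ k) : Packs G H := by
  obtain ⟨u, -, hu⟩ := hH.exists_degreeIn_le (S := (Finset.univ : Finset W)) (k := d)
    (Finset.card_pos.mp (by rw [Finset.card_univ]; lia)) hd (by rwa [Finset.card_univ, hW])
  exact h.packs hW (u := u) (by lia)

theorem EulerSparse.packs_of_le_seven [Fintype V] [Fintype W] (hG : EulerSparse G)
    (hH : EulerSparse H) (hW : Fintype.card W ≤ 7)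
    (hcard : 4 * Fintype.card W ≤ Fintype.card V) : Packs G H := by
  rw [← Finset.card_univ (α := V)] at hcard
  have h₁₀ := hG.nearIndep_succ nearIndep_zero_zero
  have h₃₀ := hG.nearIndep_succ hG.nearIndep_two_zero
  have h₄₁ := hG.nearIndep_succ hG.nearIndep_three_one
  have h₅₁ := hG.nearIndep_succ h₄₁
  have h₆₂ := hG.nearIndep_succ <| hG.nearIndep_succ <| hG.nearIndep_succ hG.nearIndep_three_two
  generalize hm : Fintype.card W = m at *
  interval_cases m
  · have := Fintype.card_eq_zero_iff.mp hm
    exact ⟨Function.Embedding.ofIsEmpty, fun a => isEmptyElim a⟩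
  · exact (nearIndep_zero_zero Finset.univ (by lia)).packs_of_zero hm
  · exact (h₁₀ Finset.univ (by lia)).packs_of_zero hm
  · exact (hG.nearIndep_two_zero Finset.univ (by lia)).packs_of_zero hm
  · exact (h₃₀ Finset.univ (by lia)).packs_of_zero hm
  · exact hH.packs_of_nearIndep (d := 3) (h₄₁ Finset.univ (by lia)) hm (by lia) (by lia) (by lia)
  · exact hH.packs_of_nearIndep (d := 4) (h₅₁ Finset.univ (by lia)) hm (by lia) (by lia) (by lia)
  · exact hH.packs_of_nearIndep (d := 4) (h₆₂ Finset.univ (by lia)) hm (by lia) (by lia) (by lia)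

end SmallGraphs

theorem exists_embedding_no_shared_edge_general {V W : Type*} [Fintype V] [Fintype W]
    {G : SimpleGraph V} {H : SimpleGraph W} (hG : EulerSparse G) (hH : EulerSparse H)
    (hcard : 4 * Fintype.card W ≤ Fintype.card V) :
    ∃ f : W ↪ V, ∀ a b, H.Adj a b → ¬G.Adj (f a) (f b) :=
  (le_or_gt (Fintype.card W) 7).elim (hG.packs_of_le_seven hH · hcard)
    (hG.packs_of_eight_le hH · hcard)

/-- For every `n`-vertex planar graph `G₁` and every planar graph `G₂` with at most
`n/4` vertices there is an injective map from `V(G₂)` to `V(G₁)` generating no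
shared edge. -/
theorem exists_embedding_no_shared_edge {V₁ V₂ : Type} [Fintype V₁] [Fintype V₂]
    (G₁ : SimpleGraph V₁) (G₂ : SimpleGraph V₂) (n : ℕ)
    (hn : Fintype.card V₁ = n)
    (hplanar₁ : Nonempty (PlanarDrawing G₁)) (hplanar₂ : Nonempty (PlanarDrawing G₂))
    (hcard : 4 * Fintype.card V₂ ≤ n) :
    ∃ f : V₂ ↪ V₁, ∀ a b : V₂, G₂.Adj a b → ¬ G₁.Adj (f a) (f b) :=
  let ⟨D₁⟩ := hplanar₁
  let ⟨D₂⟩ := hplanar₂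
  exists_embedding_no_shared_edge_general D₁.eulerSparse D₂.eulerSparse (hn ▸ hcard)
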